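/- arXiv:math/0610384 — 5 statements merged into one kernel-verified Lean document; each statement's English description precedes it below -/
import Mathlib

section
/- Let G be a finite simple cubic graph (every vertex has degree exactly 3). Then λ(G) ≥ v(G)/4. -/
/-- `H` is a path with `k` edges (a "k-edge path"), as a subgraph of `G`. -/
def SimpleGraph.Subgraph.IsKEdgePath {V : Type*} {G : SimpleGraph V}
    (H : G.Subgraph) (k : ℕ) : Prop :=
  ∃ (u v : V) (w : G.Walk u v), w.IsPath ∧ w.length = k ∧ H = w.toSubgraph

/-- `H` is a tree with `k` edges (a "k-edge tree"), as a subgraph of `G`. -/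
def SimpleGraph.Subgraph.IsKEdgeTree {V : Type*} {G : SimpleGraph V}
    (H : G.Subgraph) (k : ℕ) : Prop :=
  H.coe.IsTree ∧ H.edgeSet.ncard = k

/-- The maximum number of pairwise vertex-disjoint `k`-edge paths in `G`. -/
noncomputable def SimpleGraph.lambdaK {V : Type*} (G : SimpleGraph V) (k : ℕ) : ℕ :=
  sSup {n | ∃ P : Finset G.Subgraph,
    (∀ H ∈ P, H.IsKEdgePath k) ∧
    (P : Set G.Subgraph).Pairwise (fun H H' => Disjoint H.verts H'.verts) ∧
    P.card = n}

/-- The maximum number of pairwise vertex-disjoint `k`-edge trees in `G`. -/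
noncomputable def SimpleGraph.tauK {V : Type*} (G : SimpleGraph V) (k : ℕ) : ℕ :=
  sSup {n | ∃ P : Finset G.Subgraph,
    (∀ H ∈ P, H.IsKEdgeTree k) ∧
    (P : Set G.Subgraph).Pairwise (fun H H' => Disjoint H.verts H'.verts) ∧
    P.card = n}

set_option linter.unusedSectionVars false

namespace P3

open Finset

open Classical in
/-- adjacency indicator -/
noncomputable def ad {V : Type} (G : SimpleGraph V) (v w : V) : ℕ := if G.Adj v w then 1 else 0

/-- degree into a finset -/
noncomputable def dg {V : Type} (G : SimpleGraph V) (T : Finset V) (v : V) : ℕ := ∑ w ∈ T, ad G v w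

/-- twice the number of edges in a finset -/
noncomputable def e2 {V : Type} (G : SimpleGraph V) (T : Finset V) : ℕ := ∑ v ∈ T, dg G T v

def IsP3 {V : Type} [DecidableEq V] (G : SimpleGraph V) (s : Finset V) : Prop :=
  ∃ x y z, x ≠ z ∧ G.Adj x y ∧ G.Adj y z ∧ s = {x, y, z}

def Packing {V : Type} [DecidableEq V] (G : SimpleGraph V) (A : Finset V)
    (P : Finset (Finset V)) : Prop :=
  (∀ q ∈ P, IsP3 G q ∧ q ⊆ A) ∧ ∀ q ∈ P, ∀ r ∈ P, q ≠ r → Disjoint q r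

section
variable {V : Type} [DecidableEq V] {G : SimpleGraph V}

lemma ad_comm (v w : V) : ad G v w = ad G w v := by
  by_cases h : G.Adj v w
  · simp [ad, h, h.symm]
  · have h2 : ¬ G.Adj w v := fun h' => h h'.symm
    simp [ad, h, h2]

lemma ad_one {v w : V} (h : G.Adj v w) : ad G v w = 1 := by simp [ad, h]

lemma ad_zero {v w : V} (h : ¬ G.Adj v w) : ad G v w = 0 := by simp [ad, h]

lemma ad_le (v w : V) : ad G v w ≤ 1 := by unfold ad; split <;> simp

@[simp] lemma ad_self (v : V) : ad G v v = 0 := by simp [ad]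

lemma ad_pos {v w : V} (h : 0 < ad G v w) : G.Adj v w := by
  by_contra h'
  simp [ad, h'] at h

lemma dg_mono {S T : Finset V} (h : S ⊆ T) (v : V) : dg G S v ≤ dg G T v :=
  Finset.sum_le_sum_of_subset h

lemma dg_union {S T : Finset V} (h : Disjoint S T) (v : V) :
    dg G (S ∪ T) v = dg G S v + dg G T v := Finset.sum_union h

lemma dg_insert {T : Finset V} {x : V} (h : x ∉ T) (v : V) :
    dg G (insert x T) v = ad G v x + dg G T v := Finset.sum_insert h

lemma sum_dg_comm (S T : Finset V) : ∑ v ∈ S, dg G T v = ∑ v ∈ T, dg G S v := by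
  unfold dg
  rw [Finset.sum_comm]
  simp only [ad_comm]

lemma e2_union {S T : Finset V} (h : Disjoint S T) :
    e2 G (S ∪ T) = e2 G S + e2 G T + 2 * ∑ v ∈ S, dg G T v := by
  unfold e2
  rw [Finset.sum_union h]
  simp only [dg_union h, Finset.sum_add_distrib]
  rw [sum_dg_comm T S]; ring

lemma e2_insert {T : Finset V} {x : V} (h : x ∉ T) :
    e2 G (insert x T) = e2 G T + 2 * dg G T x := by
  rw [Finset.insert_eq, e2_union (by simpa using h)]
  simp [e2, dg]

lemma dg_pos {T : Finset V} {v : V} (h : 0 < dg G T v) : ∃ w ∈ T, G.Adj v w := by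
  by_contra h'
  push Not at h'
  have : dg G T v = 0 := Finset.sum_eq_zero (fun w hw => ad_zero (h' w hw))
  omega

lemma dg_ge_one {T : Finset V} {v w : V} (hw : w ∈ T) (h : G.Adj v w) : 1 ≤ dg G T v := by
  rw [← ad_one h]
  exact Finset.single_le_sum (f := fun w => ad G v w) (fun _ _ => Nat.zero_le _) hw

lemma dg_ge_two {T : Finset V} {v w w' : V} (hw : w ∈ T) (hw' : w' ∈ T) (hne : w ≠ w')
    (h : G.Adj v w) (h' : G.Adj v w') : 2 ≤ dg G T v := by
  have : dg G {w, w'} v ≤ dg G T v := dg_mono (by intro t; simp; rintro (rfl|rfl) <;> assumption) v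
  rw [dg_insert (by simpa using hne)] at this
  simp [dg, ad_one h, ad_one h'] at this
  simpa [dg] using this

lemma dg_ge_four {T : Finset V} {v a b c d : V} (ha : a ∈ T) (hb : b ∈ T) (hc : c ∈ T) (hd : d ∈ T)
    (hab : a ≠ b) (hac : a ≠ c) (had : a ≠ d) (hbc : b ≠ c) (hbd : b ≠ d) (hcd : c ≠ d)
    (h1 : G.Adj v a) (h2 : G.Adj v b) (h3 : G.Adj v c) (h4 : G.Adj v d) : 4 ≤ dg G T v := by
  have : dg G {a, b, c, d} v ≤ dg G T v := dg_mono (by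
    intro t; simp; rintro (rfl|rfl|rfl|rfl) <;> assumption) v
  rw [dg_insert (by simp [*]), dg_insert (by simp [*]), dg_insert (by simp [*])] at this
  simp only [dg, Finset.sum_singleton, ad_one h1, ad_one h2, ad_one h3, ad_one h4] at this
  simpa [dg] using this

lemma isP3_mk {x y z : V} (h : x ≠ z) (h1 : G.Adj x y) (h2 : G.Adj y z) : IsP3 G {x, y, z} :=
  ⟨x, y, z, h, h1, h2, rfl⟩

lemma IsP3.nonempty {s : Finset V} (h : IsP3 G s) : s.Nonempty := by
  obtain ⟨x, y, z, -, -, -, rfl⟩ := h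
  exact ⟨x, by simp⟩

lemma IsP3.card {s : Finset V} (h : IsP3 G s) : s.card = 3 := by
  obtain ⟨x, y, z, h, h1, h2, rfl⟩ := h
  exact Finset.card_eq_three.2 ⟨x, y, z, h1.ne, h, h2.ne, rfl⟩

lemma three_two {a b c : V} (hab : a ≠ b) (hac : a ≠ c) (hbc : b ≠ c) (u v : V) :
    (a ≠ u ∧ a ≠ v) ∨ (b ≠ u ∧ b ≠ v) ∨ (c ≠ u ∧ c ≠ v) := by grind

set_option maxHeartbeats 2000000 in
/-- Local analysis. -/
lemma local_bound (U p : Finset V) (x y z : V) (hp : p = {x, y, z}) (hxz : x ≠ z)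
    (hxy : G.Adj x y) (hyz : G.Adj y z) (hd : Disjoint p U)
    (hdeg : ∀ v ∈ p ∪ U, dg G (p ∪ U) v ≤ 3)
    (R0 : ∀ q, IsP3 G q → q ⊆ U → False)
    (R1 : ∀ q r, IsP3 G q → IsP3 G r → q ⊆ p ∪ U → r ⊆ p ∪ U → Disjoint q r → False)
    (R2 : ∀ q, IsP3 G q → q ⊆ p ∪ U →
      2 * e2 G q + e2 G ((p ∪ U) \ q) ≤ 2 * e2 G p + e2 G U) :
    ∑ u ∈ U, (2 + dg G U u) * dg G p u ≤ 6 ∨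
    ∃ a ∈ U, ∃ b ∈ U, a ≠ b ∧ 12 ≤ e2 G (p ∪ {a, b}) ∧
      (∃ w ∈ p, G.Adj a w) ∧ (∃ w ∈ p, G.Adj b w) := by
  have hxU : x ∉ U := fun h => Finset.disjoint_left.1 hd (by simp [hp]) h
  have hyU : y ∉ U := fun h => Finset.disjoint_left.1 hd (by simp [hp]) h
  have hzU : z ∉ U := fun h => Finset.disjoint_left.1 hd (by simp [hp]) h
  have hne1 := hxy.ne
  have hne2 := hyz.ne
  have mx : x ∈ p ∪ U := by simp [hp]
  have my : y ∈ p ∪ U := by simp [hp]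
  have mz : z ∈ p ∪ U := by simp [hp]
  have mU : ∀ u ∈ U, u ∈ p ∪ U := by intro u hu; simp [hu]
  have ne : ∀ u ∈ U, u ≠ x ∧ u ≠ y ∧ u ≠ z := by
    intro u hu; refine ⟨?_, ?_, ?_⟩ <;> rintro rfl <;> contradiction
  have d4 : ∀ v a b c d : V, v ∈ p ∪ U → a ∈ p ∪ U → b ∈ p ∪ U → c ∈ p ∪ U → d ∈ p ∪ U →
      a ≠ b → a ≠ c → a ≠ d → b ≠ c → b ≠ d → c ≠ d →
      G.Adj v a → G.Adj v b → G.Adj v c → G.Adj v d → False := by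
    intro v a b c d hv ha hb hc hd' h1 h2 h3 h4 h5 h6 e1 e2' e3 e4
    have := dg_ge_four ha hb hc hd' h1 h2 h3 h4 h5 h6 e1 e2' e3 e4
    have := hdeg v hv
    omega
  -- two disjoint paths
  have K : ∀ a b c d e f : V, a ∈ p ∪ U → b ∈ p ∪ U → c ∈ p ∪ U → d ∈ p ∪ U → e ∈ p ∪ U →
      f ∈ p ∪ U → [a, b, c, d, e, f].Nodup → G.Adj a b → G.Adj b c → G.Adj d e → G.Adj e f →
      False := by
    intro a b c d e f ha hb hc hd' he hf hn h1 h2 h3 h4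
    simp at hn
    refine R1 {a, b, c} {d, e, f} (isP3_mk (by tauto) h1 h2) (isP3_mk (by tauto) h3 h4) ?_ ?_ ?_
    · intro t; simp only [Finset.mem_insert, Finset.mem_singleton]
      rintro (rfl | rfl | rfl) <;> assumption
    · intro t; simp only [Finset.mem_insert, Finset.mem_singleton]
      rintro (rfl | rfl | rfl) <;> assumption
    · simp [Finset.disjoint_left]; tauto
  -- U has max degree 1
  have U1 : ∀ u ∈ U, ∀ v ∈ U, ∀ w ∈ U, G.Adj u v → G.Adj u w → v = w := by
    intro u hu v hv w hw h1 h2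
    by_contra hvw
    refine R0 {v, u, w} (isP3_mk hvw h1.symm h2) ?_
    intro t; simp only [Finset.mem_insert, Finset.mem_singleton]
    rintro (rfl | rfl | rfl) <;> assumption
  have dU0 : ∀ u ∈ U, (∀ v ∈ U, ¬ G.Adj u v) → dg G U u = 0 := by
    intro u hu h
    exact Finset.sum_eq_zero (fun w hw => ad_zero (h w hw))
  have dU1 : ∀ u ∈ U, ∀ v ∈ U, G.Adj u v → dg G U u = 1 := by
    intro u hu v hv h
    unfold dg
    rw [Finset.sum_eq_single_of_mem v hv, ad_one h]
    intro w hw hwv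
    exact ad_zero (fun h' => hwv (U1 u hu w hw v hv h' h))
  have dp : ∀ u, dg G p u = ad G u x + ad G u y + ad G u z := by
    intro u
    rw [hp, dg_insert (by simp [hne1, hxz]), dg_insert (by simp [hne2])]
    simp [dg, add_assoc]
  have dpU : ∀ u ∈ U, dg G p u + dg G U u ≤ 3 := by
    intro u hu
    rw [← dg_union hd]; exact hdeg u (mU u hu)
  -- structural facts
  have F2 : ∀ a ∈ U, ∀ a' ∈ U, ∀ b ∈ U, G.Adj a a' → b ≠ a → b ≠ a' → G.Adj x a →
      ¬ G.Adj y b ∧ ¬ G.Adj z b := by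
    intro a ha a' ha' b hb haa hba hba' hxa
    obtain ⟨_, _, _⟩ := ne a ha
    obtain ⟨_, _, _⟩ := ne a' ha'
    obtain ⟨_, _, _⟩ := ne b hb
    have := haa.ne
    constructor
    · intro h
      refine K x a a' z y b mx (mU _ ha) (mU _ ha') mz my (mU _ hb) ?_ hxa haa hyz.symm h
      simp; grind
    · intro h
      refine K x a a' y z b mx (mU _ ha) (mU _ ha') my mz (mU _ hb) ?_ hxa haa hyz h
      simp; grind
  have F2' : ∀ a ∈ U, ∀ a' ∈ U, ∀ b ∈ U, G.Adj a a' → b ≠ a → b ≠ a' → G.Adj z a →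
      ¬ G.Adj y b ∧ ¬ G.Adj x b := by
    intro a ha a' ha' b hb haa hba hba' hxa
    obtain ⟨_, _, _⟩ := ne a ha
    obtain ⟨_, _, _⟩ := ne a' ha'
    obtain ⟨_, _, _⟩ := ne b hb
    have := haa.ne
    constructor
    · intro h
      refine K z a a' x y b mz (mU _ ha) (mU _ ha') mx my (mU _ hb) ?_ hxa haa hxy h
      simp; grind
    · intro h
      refine K z a a' y x b mz (mU _ ha) (mU _ ha') my mx (mU _ hb) ?_ hxa haa hxy.symm h
      simp; grind
  -- e2 of p
  have ep : ¬ G.Adj x z → e2 G p = 4 := by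
    intro h
    rw [hp, e2_insert (by simp [hne1, hxz]), e2_insert (by simp [hne2])]
    simp [e2, dg, Finset.sum_pair hne2, ad_one hxy, ad_one hyz, ad_zero h]
  -- e2 of U minus a vertex
  have eU : ∀ a ∈ U, e2 G U = e2 G (U.erase a) + 2 * dg G U a := by
    intro a ha
    conv_lhs => rw [← Finset.insert_erase ha, e2_insert (Finset.notMem_erase a U)]
    congr 2
    conv_rhs => rw [← Finset.insert_erase ha, dg_insert (Finset.notMem_erase a U)]
    simp
  have e2mono : ∀ S T : Finset V, S ⊆ T → e2 G S ≤ e2 G T := by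
    intro S T h
    exact (Finset.sum_le_sum (fun v _ => dg_mono h v)).trans (Finset.sum_le_sum_of_subset h)
  -- net swap
  have NS : ∀ a ∈ U, ∀ b ∈ U, a ≠ b → ∀ t, (t = x ∨ t = z) → G.Adj t a → G.Adj t b →
      G.Adj y a → False := by
    intro a ha b hb hab t ht hta htb hya
    obtain ⟨_, _, _⟩ := ne a ha
    obtain ⟨_, _, _⟩ := ne b hb
    have hty : G.Adj t y := by rcases ht with rfl | rfl; exacts [hxy, hyz.symm]
    have htU : t ∉ U := by rcases ht with rfl | rfl <;> assumption
    have mt : t ∈ p ∪ U := by rcases ht with rfl | rfl <;> assumption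
    have hnxz : ¬ G.Adj x z := by
      intro h
      rcases ht with rfl | rfl
      · exact d4 t y z a b mt my mz (mU _ ha) (mU _ hb) (by grind) (by grind) (by grind)
          (by grind) (by grind) (by grind) hty h hta htb
      · exact d4 t y x a b mt my mx (mU _ ha) (mU _ hb) (by grind) (by grind) (by grind)
          (by grind) (by grind) (by grind) hty h.symm hta htb
    have hta' : t ≠ a := hta.ne
    have h := R2 {t, y, a} (isP3_mk hta.ne hty hya) (by
      intro s; simp only [Finset.mem_insert, Finset.mem_singleton]
      rintro (rfl | rfl | rfl) <;> grind)
    have e1 : e2 G {t, y, a} = 6 := by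
      rw [e2_insert (by simp [hty.ne, hta.ne]), e2_insert (by simp [hya.ne])]
      simp [e2, dg, Finset.sum_pair hya.ne, ad_one hty, ad_one hta, ad_one hya]
    have e3 : e2 G (U.erase a) ≤ e2 G ((p ∪ U) \ {t, y, a}) := by
      apply e2mono
      intro s hs
      simp only [Finset.mem_erase] at hs
      have := ne s hs.2
      simp; grind
    have e4 := eU a ha
    have e5 : dg G U a ≤ 1 := by
      have h1 := dpU a ha
      have h2 : 2 ≤ dg G p a := dg_ge_two (w := t) (w' := y) (by grind) (by simp [hp]) hty.ne hta.symm hya.symm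
      omega
    have := ep hnxz
    omega
  -- pairs with a partner elsewhere
  have PA : ∀ a ∈ U, ∀ a' ∈ U, ∀ b ∈ U, G.Adj a a' → b ≠ a → b ≠ a' → 0 < dg G p a → 0 < dg G p b →
      dg G p a ≤ 1 ∧ dg G p b ≤ 1 := by
    intro a ha a' ha' b hb haa hba hba' hpa hpb
    obtain ⟨_, _, _⟩ := ne a ha
    obtain ⟨_, _, _⟩ := ne a' ha'
    obtain ⟨_, _, _⟩ := ne b hb
    have hn := haa.ne
    have f2 := F2 a ha a' ha' b hb haa hba hba'
    have f2' := F2' a ha a' ha' b hb haa hba hba'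
    have ns := fun t ht h1 h2 h3 => NS a ha b hb hba.symm t ht h1 h2 h3
    rw [dp, ad_comm a, ad_comm a, ad_comm a] at hpa ⊢
    rw [dp, ad_comm b, ad_comm b, ad_comm b] at hpb ⊢
    have f3 : G.Adj y a → ¬ (G.Adj x b ∧ G.Adj z b) := by
      rintro h ⟨h1, h2⟩
      refine K y a a' x b z my (mU _ ha) (mU _ ha') mx (mU _ hb) mz ?_ h haa h1 h2.symm
      simp; grind
    have f4 : G.Adj y a → ¬ G.Adj y b := by
      intro h h1
      exact d4 y x z a b my mx mz (mU _ ha) (mU _ hb) (by grind) (by grind) (by grind)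
          (by grind) (by grind) (by grind) hxy.symm hyz h h1
    have ns1 := ns x (Or.inl rfl)
    have ns2 := ns z (Or.inr rfl)
    have l1 := ad_le (G := G) x a
    have l2 := ad_le (G := G) y a
    have l3 := ad_le (G := G) z a
    have l4 := ad_le (G := G) x b
    have l5 := ad_le (G := G) y b
    have l6 := ad_le (G := G) z b
    by_cases g1 : G.Adj x a
    · have k5 := (f2 g1).1
      have k6 := (f2 g1).2
      rw [ad_zero k5, ad_zero k6] at hpb ⊢
      have g4 : G.Adj x b := ad_pos (by omega)
      rw [ad_zero (fun h => (f2' h).2 g4), ad_zero (ns1 g1 g4)]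
      omega
    · by_cases g3 : G.Adj z a
      · have k5 := (f2' g3).1
        have k4 := (f2' g3).2
        rw [ad_zero k5, ad_zero k4] at hpb ⊢
        have g6 : G.Adj z b := ad_pos (by omega)
        rw [ad_zero g1, ad_zero (ns2 g3 g6)]
        omega
      · rw [ad_zero g1, ad_zero g3] at hpa ⊢
        have g2 : G.Adj y a := ad_pos (by omega)
        rw [ad_zero (f4 g2)]
        refine ⟨by omega, ?_⟩
        by_cases g4 : G.Adj x b
        · rw [ad_zero (fun h => f3 g2 ⟨g4, h⟩)]; omega
        · rw [ad_zero g4]; omega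
  -- uniqueness at the middle
  have FY : ∀ a ∈ U, ∀ b ∈ U, G.Adj y a → G.Adj y b → a = b := by
    intro a ha b hb h h1
    by_contra hab
    obtain ⟨_, _, _⟩ := ne a ha
    obtain ⟨_, _, _⟩ := ne b hb
    exact d4 y x z a b my mx mz (mU _ ha) (mU _ hb) (by grind) (by grind) (by grind)
          (by grind) (by grind) (by grind) hxy.symm hyz h h1
  have F1 : ∀ a ∈ U, ∀ b ∈ U, ∀ u ∈ U, G.Adj x a → G.Adj x b → a ≠ b → u ≠ a → u ≠ b →
      dg G p u = 0 := by
    intro a ha b hb u hu h1 h2 h3 h4 h5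
    obtain ⟨_, _, _⟩ := ne a ha
    obtain ⟨_, _, _⟩ := ne b hb
    obtain ⟨_, _, _⟩ := ne u hu
    rw [dp, ad_zero, ad_zero, ad_zero]
    · intro h
      refine K a x b y z u (mU _ ha) mx (mU _ hb) my mz (mU _ hu) ?_ h1.symm h2 hyz h.symm
      simp; grind
    · intro h
      refine K a x b z y u (mU _ ha) mx (mU _ hb) mz my (mU _ hu) ?_ h1.symm h2 hyz.symm h.symm
      simp; grind
    · intro h
      exact d4 x y a b u mx my (mU _ ha) (mU _ hb) (mU _ hu) (by grind) (by grind) (by grind)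
          (by grind) (by grind) (by grind) hxy h1 h2 h.symm
  have F1' : ∀ a ∈ U, ∀ b ∈ U, ∀ u ∈ U, G.Adj z a → G.Adj z b → a ≠ b → u ≠ a → u ≠ b →
      dg G p u = 0 := by
    intro a ha b hb u hu h1 h2 h3 h4 h5
    obtain ⟨_, _, _⟩ := ne a ha
    obtain ⟨_, _, _⟩ := ne b hb
    obtain ⟨_, _, _⟩ := ne u hu
    rw [dp, ad_zero, ad_zero, ad_zero]
    · intro h
      exact d4 z y a b u mz my (mU _ ha) (mU _ hb) (mU _ hu) (by grind) (by grind) (by grind)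
          (by grind) (by grind) (by grind) hyz.symm h1 h2 h.symm
    · intro h
      refine K a z b x y u (mU _ ha) mz (mU _ hb) mx my (mU _ hu) ?_ h1.symm h2 hxy h.symm
      simp; grind
    · intro h
      refine K a z b y x u (mU _ ha) mz (mU _ hb) my mx (mU _ hu) ?_ h1.symm h2 hxy.symm h.symm
      simp; grind
  have dpp : ∀ u, 0 < dg G p u → G.Adj x u ∨ G.Adj y u ∨ G.Adj z u := by
    intro u h
    obtain ⟨w, hw, h⟩ := dg_pos h
    rw [hp] at hw
    simp only [Finset.mem_insert, Finset.mem_singleton] at hw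
    rcases hw with rfl | rfl | rfl
    · exact Or.inl h.symm
    · exact Or.inr (Or.inl h.symm)
    · exact Or.inr (Or.inr h.symm)
  -- three neighbours
  have T : ∀ c ∈ U, ∀ a ∈ U, ∀ d ∈ U, c ≠ a → c ≠ d → a ≠ d → G.Adj x c → G.Adj y a → G.Adj z d →
      ∑ u ∈ U, (2 + dg G U u) * dg G p u ≤ 6 := by
    intro c hc a ha d hd' hca hcd had xc ya zd
    obtain ⟨_, _, _⟩ := ne a ha
    obtain ⟨_, _, _⟩ := ne c hc
    obtain ⟨_, _, _⟩ := ne d hd'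
    have pa : 0 < dg G p a := dg_ge_one (w := y) (by simp [hp]) ya.symm
    have pc : 0 < dg G p c := dg_ge_one (w := x) (by simp [hp]) xc.symm
    have pd : 0 < dg G p d := dg_ge_one (w := z) (by simp [hp]) zd.symm
    have ux : ∀ u ∈ U, G.Adj x u → u = c := by
      intro u hu h
      by_contra huc
      by_cases hua : u = a
      · have := F1 c hc u hu d hd' xc h (Ne.symm huc) (by grind) (by grind)
        omega
      · have := F1 c hc u hu a ha xc h (Ne.symm huc) (by grind) (by grind)
        omega
    have uz : ∀ u ∈ U, G.Adj z u → u = d := by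
      intro u hu h
      by_contra huc
      by_cases hua : u = a
      · have := F1' d hd' u hu c hc zd h (Ne.symm huc) (by grind) (by grind)
        omega
      · have := F1' d hd' u hu a ha zd h (Ne.symm huc) (by grind) (by grind)
        omega
    have uy : ∀ u ∈ U, G.Adj y u → u = a := fun u hu h => FY u hu a ha h ya
    have nc : ∀ v ∈ U, ¬ G.Adj c v := by
      intro v hv h
      by_cases hva : v = a
      · exact (F2 c hc v hv d hd' h (by grind) (by grind) xc).2 zd
      · exact (F2 c hc v hv a ha h (by grind) (by grind) xc).1 ya
    have nd : ∀ v ∈ U, ¬ G.Adj d v := by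
      intro v hv h
      by_cases hva : v = a
      · exact (F2' d hd' v hv c hc h (by grind) (by grind) zd).2 xc
      · exact (F2' d hd' v hv a ha h (by grind) (by grind) zd).1 ya
    have na : ∀ v ∈ U, ¬ G.Adj a v := by
      intro b hb h
      obtain ⟨_, _, _⟩ := ne b hb
      have hbc : b ≠ c := by rintro rfl; exact nc a ha h.symm
      have hbd : b ≠ d := by rintro rfl; exact nd a ha h.symm
      have hab := h.ne
      have hnxz : ¬ G.Adj x z := by
        intro hh
        refine K y a b c x z my (mU _ ha) (mU _ hb) (mU _ hc) mx mz ?_ ya h xc.symm hh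
        simp; grind
      have h2 := R2 {y, a, b} (isP3_mk (by grind) ya h) (by
        intro s; simp only [Finset.mem_insert, Finset.mem_singleton]
        rintro (rfl | rfl | rfl) <;> grind)
      have e1 : 4 ≤ e2 G {y, a, b} := by
        rw [e2_insert (by simp; grind), e2_insert (by simp; grind)]
        simp [e2, dg, Finset.sum_pair h.ne, ad_one ya, ad_one h]
        omega
      have e3 : (p ∪ U) \ {y, a, b} = insert x (insert z ((U.erase a).erase b)) := by
        ext s
        simp [hp]
        grind
      have hz' : z ∉ (U.erase a).erase b := by simp [hzU]
      have hx' : x ∉ insert z ((U.erase a).erase b) := by simp [hxU, hxz]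
      rw [e3, e2_insert hx', e2_insert hz'] at h2
      have g1 : 1 ≤ dg G (insert z ((U.erase a).erase b)) x :=
        dg_ge_one (w := c) (by simp; grind) xc
      have g2 : 1 ≤ dg G ((U.erase a).erase b) z :=
        dg_ge_one (w := d) (by simp; grind) zd
      have g3 := eU a ha
      rw [dU1 a ha b hb h] at g3
      have g4 : e2 G (U.erase a) ≤ e2 G ((U.erase a).erase b) := by
        have hbm : b ∈ U.erase a := by simp; grind
        conv_lhs => rw [← Finset.insert_erase hbm, e2_insert (Finset.notMem_erase _ _)]
        have : dg G ((U.erase a).erase b) b = 0 := by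
          refine Finset.sum_eq_zero (fun w hw => ad_zero (fun hh => ?_))
          simp at hw
          exact hw.2.1 (U1 b hb w hw.2.2 a ha hh h.symm)
        omega
      have := ep hnxz
      omega
    have hsub : ({c, a, d} : Finset V) ⊆ U := by
      intro s; simp only [Finset.mem_insert, Finset.mem_singleton]
      rintro (rfl | rfl | rfl) <;> assumption
    rw [← Finset.sum_subset hsub]
    · rw [Finset.sum_insert (by simp; grind), Finset.sum_pair had, dU0 c hc nc, dU0 a ha na,
        dU0 d hd' nd, dp, dp, dp]
      have z1 : ad G c y = 0 := ad_zero (fun h => hca (uy c hc h.symm))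
      have z2 : ad G c z = 0 := ad_zero (fun h => hcd (uz c hc h.symm))
      have z3 : ad G a x = 0 := ad_zero (fun h => hca (ux a ha h.symm).symm)
      have z4 : ad G a z = 0 := ad_zero (fun h => had (uz a ha h.symm))
      have z5 : ad G d x = 0 := ad_zero (fun h => hcd (ux d hd' h.symm).symm)
      have z6 : ad G d y = 0 := ad_zero (fun h => had (uy d hd' h.symm).symm)
      rw [z1, z2, z3, z4, z5, z6]
      have := ad_le (G := G) c x
      have := ad_le (G := G) a y
      have := ad_le (G := G) d z
      omega
    · intro u hu hnu
      have : dg G p u = 0 := by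
        by_contra h0
        rcases dpp u (by omega) with h | h | h
        · have := ux u hu h; simp [this] at hnu
        · have := uy u hu h; simp [this] at hnu
        · have := uz u hu h; simp [this] at hnu
      simp [this]
  have hsum : ∑ u ∈ U, (2 + dg G U u) * dg G p u =
      ∑ u ∈ U.filter (fun u => 0 < dg G p u), (2 + dg G U u) * dg G p u := by
    symm
    apply Finset.sum_subset (Finset.filter_subset _ _)
    intro u hu hnu
    simp [hu] at hnu
    simp [hnu]
  have key : ∀ u ∈ U, (2 + dg G U u) * dg G p u ≤ 6 := by
    intro u hu
    have h1 := dpU u hu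
    have h2 : dg G U u ≤ 1 := by
      by_cases h : ∃ v ∈ U, G.Adj u v
      · obtain ⟨v, hv, h⟩ := h
        rw [dU1 u hu v hv h]
      · push Not at h
        rw [dU0 u hu h]; omega
    have h3 : dg G U u = 0 ∨ dg G U u = 1 := by omega
    rcases h3 with h3 | h3 <;> rw [h3] <;> omega
  set N := U.filter (fun u => 0 < dg G p u) with hN
  have hNm : ∀ u, u ∈ N ↔ u ∈ U ∧ 0 < dg G p u := by intro u; simp [hN]
  rcases Nat.lt_or_ge 2 N.card with h3 | h2
  · left
    obtain ⟨a, ha, b, hb, c, hc, hab, hac, hbc⟩ := Finset.two_lt_card.1 h3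
    rw [hNm] at ha hb hc
    have ux : ∀ u v, u ∈ N → v ∈ N → G.Adj x u → G.Adj x v → u = v := by
      intro u v hu hv h1 h2
      by_contra huv
      rw [hNm] at hu hv
      have f := fun w hw => F1 u hu.1 v hv.1 w hw h1 h2 huv
      rcases three_two hab hac hbc u v with ⟨q1, q2⟩ | ⟨q1, q2⟩ | ⟨q1, q2⟩
      · have := f a ha.1 q1 q2; omega
      · have := f b hb.1 q1 q2; omega
      · have := f c hc.1 q1 q2; omega
    have uz : ∀ u v, u ∈ N → v ∈ N → G.Adj z u → G.Adj z v → u = v := by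
      intro u v hu hv h1 h2
      by_contra huv
      rw [hNm] at hu hv
      have f := fun w hw => F1' u hu.1 v hv.1 w hw h1 h2 huv
      rcases three_two hab hac hbc u v with ⟨q1, q2⟩ | ⟨q1, q2⟩ | ⟨q1, q2⟩
      · have := f a ha.1 q1 q2; omega
      · have := f b hb.1 q1 q2; omega
      · have := f c hc.1 q1 q2; omega
    have hma := (hNm a).2 ha
    have hmb := (hNm b).2 hb
    have hmc := (hNm c).2 hc
    rcases dpp a ha.2 with h1 | h1 | h1 <;> rcases dpp b hb.2 with h2 | h2 | h2 <;>
      rcases dpp c hc.2 with h3 | h3 | h3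
    all_goals first
      | exact absurd (ux a b hma hmb h1 h2) hab
      | exact absurd (uz a b hma hmb h1 h2) hab
      | exact absurd (FY a ha.1 b hb.1 h1 h2) hab
      | exact absurd (ux a c hma hmc h1 h3) hac
      | exact absurd (uz a c hma hmc h1 h3) hac
      | exact absurd (FY a ha.1 c hc.1 h1 h3) hac
      | exact absurd (ux b c hmb hmc h2 h3) hbc
      | exact absurd (uz b c hmb hmc h2 h3) hbc
      | exact absurd (FY b hb.1 c hc.1 h2 h3) hbc
      | exact T a ha.1 b hb.1 c hc.1 hab hac hbc h1 h2 h3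
      | exact T a ha.1 c hc.1 b hb.1 hac hab hbc.symm h1 h3 h2
      | exact T b hb.1 a ha.1 c hc.1 hab.symm hbc hac h2 h1 h3
      | exact T b hb.1 c hc.1 a ha.1 hbc hab.symm hac.symm h2 h3 h1
      | exact T c hc.1 a ha.1 b hb.1 hac.symm hbc.symm hab h3 h1 h2
      | exact T c hc.1 b hb.1 a ha.1 hbc.symm hac.symm hab.symm h3 h2 h1
  · rcases Nat.lt_or_ge N.card 2 with h1 | h1
    · left
      rw [hsum]
      have : Nonempty V := ⟨x⟩
      rcases Finset.card_le_one_iff_subset_singleton.1 (by omega : N.card ≤ 1) with ⟨a, ha⟩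
      rcases Finset.subset_singleton_iff.1 ha with h | h
      · rw [h]; simp
      · rw [h, Finset.sum_singleton]
        exact key a ((hNm a).1 (by simp [h])).1
    · obtain ⟨a, b, hab, hNab⟩ := Finset.card_eq_two.1 (by omega : N.card = 2)
      obtain ⟨ha, pa⟩ := (hNm a).1 (by simp [hNab])
      obtain ⟨hb, pb⟩ := (hNm b).1 (by simp [hNab])
      rw [hsum, hNab, Finset.sum_pair hab]
      have hap : a ∉ p := fun h => Finset.disjoint_left.1 hd h ha
      have hbp : b ∉ p := fun h => Finset.disjoint_left.1 hd h hb
      have eS : e2 G (p ∪ {a, b}) = e2 G p + 2 * dg G p a + 2 * dg G p b + 2 * ad G a b := by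
        have : p ∪ {a, b} = insert a (insert b p) := by ext; simp
        rw [this, e2_insert (by simp [hab, hap]), e2_insert hbp, dg_insert hbp, ad_comm a b]; ring
      have ep4 : 4 ≤ e2 G p := by
        rw [hp, e2_insert (by simp [hne1, hxz]), e2_insert (by simp [hne2])]
        simp [e2, dg, Finset.sum_pair hne2, ad_one hxy, ad_one hyz]
        omega
      have fin : 12 ≤ e2 G (p ∪ {a, b}) → ∃ a ∈ U, ∃ b ∈ U, a ≠ b ∧ 12 ≤ e2 G (p ∪ {a, b}) ∧
          (∃ w ∈ p, G.Adj a w) ∧ (∃ w ∈ p, G.Adj b w) :=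
        fun h => ⟨a, ha, b, hb, hab, h, dg_pos pa, dg_pos pb⟩
      have le1 : ∀ u ∈ U, dg G U u ≤ 1 := by
        intro u hu
        by_cases h : ∃ v ∈ U, G.Adj u v
        · obtain ⟨v, hv, h⟩ := h
          rw [dU1 u hu v hv h]
        · push Not at h
          rw [dU0 u hu h]; omega
      by_cases hadj : G.Adj a b
      · rw [dU1 a ha b hb hadj, dU1 b hb a ha hadj.symm]
        rw [eS, ad_one hadj] at fin
        by_cases h : 3 ≤ dg G p a + dg G p b
        · right; rw [← ad_one hadj, ← eS] at fin; exact fin (by rw [eS, ad_one hadj]; omega)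
        · left; omega
      · by_cases hpa : ∃ a' ∈ U, G.Adj a a'
        · obtain ⟨a', ha', haa⟩ := hpa
          obtain ⟨q1, q2⟩ := PA a ha a' ha' b hb haa hab.symm (by rintro rfl; exact hadj haa) pa pb
          have := le1 a ha
          have := le1 b hb
          left; nlinarith
        · by_cases hpb : ∃ b' ∈ U, G.Adj b b'
          · obtain ⟨b', hb', hbb⟩ := hpb
            obtain ⟨q1, q2⟩ := PA b hb b' hb' a ha hbb hab
              (by rintro rfl; exact hadj hbb.symm) pb pa
            have := le1 a ha
            have := le1 b hb
            left; nlinarith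
          · push Not at hpa hpb
            rw [dU0 a ha hpa, dU0 b hb hpb]
            by_cases h : 4 ≤ dg G p a + dg G p b
            · right; exact fin (by rw [eS]; omega)
            · left; omega

end
end P3
namespace P3

/-- symmetric Boolean matrix -/
def mk5 (a b c d e f g h i j : Bool) : Fin 5 → Fin 5 → Bool :=
  ![![false, a, b, c, d], ![a, false, e, f, g], ![b, e, false, h, i], ![c, f, h, false, j],
    ![d, g, i, j, false]]

def deg5 (g : Fin 5 → Fin 5 → Bool) (i : Fin 5) : ℕ :=
  (g i 0).toNat + (g i 1).toNat + (g i 2).toNat + (g i 3).toNat + (g i 4).toNat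

def sum5 (g : Fin 5 → Fin 5 → Bool) : ℕ := deg5 g 0 + deg5 g 1 + deg5 g 2 + deg5 g 3 + deg5 g 4

def Q5 (g : Fin 5 → Fin 5 → Bool) (s t : Fin 5) : Prop :=
  ∃ x, x ≠ s ∧ x ≠ t ∧ ∃ y, g x y = true ∧ y ≠ s ∧ y ≠ t ∧
      ∃ z, g y z = true ∧ z ≠ s ∧ z ≠ t ∧ x ≠ z

instance (g : Fin 5 → Fin 5 → Bool) (s t : Fin 5) : Decidable (Q5 g s t) := by
  unfold Q5; infer_instance

def M5 (g : Fin 5 → Fin 5 → Bool) (s t : Fin 5) : Prop :=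
  ∃ u, g s u = true ∧ u ≠ s ∧ u ≠ t ∧ ∃ v, g t v = true ∧ v ≠ s ∧ v ≠ t ∧ u ≠ v

instance (g : Fin 5 → Fin 5 → Bool) (s t : Fin 5) : Decidable (M5 g s t) := by
  unfold M5; infer_instance

def Concl5 (g : Fin 5 → Fin 5 → Bool) : Prop :=
  (sum5 g = 12 ∨ sum5 g = 14) ∧
  (∀ s, Q5 g s s) ∧
  (∀ s, deg5 g s < 3 → ∀ t, s ≠ t → deg5 g t < 3 → M5 g s t ∧ Q5 g s t) ∧
  (sum5 g = 14 → ∀ s, deg5 g s < 3 → ∃ u, g s u = true ∧ Q5 g s u)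

instance (g : Fin 5 → Fin 5 → Bool) : Decidable (Concl5 g) := by
  unfold Concl5; infer_instance

set_option maxRecDepth 100000 in
lemma all5 : ∀ a b c d e f g h i j : Bool, 12 ≤ sum5 (mk5 a b c d e f g h i j) →
    (∀ s, deg5 (mk5 a b c d e f g h i j) s ≤ 3 ∧ 1 ≤ deg5 (mk5 a b c d e f g h i j) s) →
    Concl5 (mk5 a b c d e f g h i j) := by
  decide +kernel

lemma gen5 (g : Fin 5 → Fin 5 → Bool) (hs : ∀ i j, g i j = g j i) (hi : ∀ i, g i i = false)
    (h12 : 12 ≤ sum5 g) (hd : ∀ s, deg5 g s ≤ 3 ∧ 1 ≤ deg5 g s) : Concl5 g := by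
  have : g = mk5 (g 0 1) (g 0 2) (g 0 3) (g 0 4) (g 1 2) (g 1 3) (g 1 4) (g 2 3) (g 2 4)
      (g 3 4) := by
    funext i j
    fin_cases i <;> fin_cases j <;> simp [mk5, hi] <;> exact hs _ _
  rw [this] at h12 hd ⊢
  exact all5 _ _ _ _ _ _ _ _ _ _ h12 hd

section
variable {V : Type} [DecidableEq V] {G : SimpleGraph V}

lemma five (S : Finset V) (hS : S.card = 5) (h12 : 12 ≤ e2 G S)
    (hd : ∀ v ∈ S, dg G S v ≤ 3 ∧ 1 ≤ dg G S v) :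
    (e2 G S = 12 ∨ e2 G S = 14) ∧
    (∀ s ∈ S, ∃ q, IsP3 G q ∧ q ⊆ S ∧ s ∉ q) ∧
    (∀ s ∈ S, ∀ t ∈ S, s ≠ t → dg G S s < 3 → dg G S t < 3 →
      (∃ u ∈ S, ∃ v ∈ S, G.Adj s u ∧ G.Adj t v ∧ u ≠ s ∧ u ≠ t ∧ v ≠ s ∧ v ≠ t ∧ u ≠ v) ∧
      (∃ q, IsP3 G q ∧ q ⊆ S ∧ s ∉ q ∧ t ∉ q)) ∧
    (e2 G S = 14 → ∀ s ∈ S, dg G S s < 3 → ∃ u ∈ S, G.Adj s u ∧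
      ∃ q, IsP3 G q ∧ q ⊆ S ∧ s ∉ q ∧ u ∉ q) := by
  classical
  let φ : Fin 5 ≃ S := (Finset.equivFinOfCardEq hS).symm
  let g : Fin 5 → Fin 5 → Bool := fun i j => decide (G.Adj (φ i : V) (φ j))
  have gt : ∀ i j, g i j = true ↔ G.Adj (φ i : V) (φ j) := by intro i j; simp [g]
  have inj : ∀ i j, (φ i : V) = φ j ↔ i = j := by
    intro i j; rw [Subtype.coe_inj]; exact φ.injective.eq_iff
  have sm : ∀ f : V → ℕ, ∑ w ∈ S, f w = ∑ i, f (φ i) := by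
    intro f
    rw [← Finset.sum_coe_sort S, ← Equiv.sum_comp φ]
  have hdg : ∀ i, deg5 g i = dg G S (φ i) := by
    intro i
    unfold dg
    rw [sm, Fin.sum_univ_five]
    have : ∀ j, ad G (φ i : V) (φ j) = (g i j).toNat := by
      intro j
      by_cases h : G.Adj (φ i : V) (φ j) <;> simp [ad, g, h]
    simp only [this, deg5]
  have hsum : sum5 g = e2 G S := by
    unfold e2
    rw [sm, Fin.sum_univ_five]
    simp only [← hdg, sum5]
  obtain ⟨c0, c1, c2, c3⟩ := gen5 g (fun i j => by simp [g, G.adj_comm]) (fun i => by simp [g])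
    (by rw [hsum]; exact h12) (fun s => by rw [hdg]; exact hd _ (φ s).2)
  rw [hsum] at c0
  have sur : ∀ s ∈ S, ∃ i, (φ i : V) = s := fun s hs =>
    ⟨φ.symm ⟨s, hs⟩, by simp⟩
  have P : ∀ x y z, g x y = true → g y z = true → x ≠ z →
      IsP3 G {(φ x : V), (φ y : V), (φ z : V)} ∧ ({(φ x : V), (φ y : V), (φ z : V)} : Finset V) ⊆ S := by
    intro x y z h1 h2 h3
    refine ⟨isP3_mk (by rwa [ne_eq, inj]) ((gt _ _).1 h1) ((gt _ _).1 h2), ?_⟩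
    intro t; simp only [Finset.mem_insert, Finset.mem_singleton]
    rintro (rfl | rfl | rfl) <;> exact (φ _).2
  have Q : ∀ s x y z, x ≠ s → y ≠ s → z ≠ s →
      (φ s : V) ∉ ({(φ x : V), (φ y : V), (φ z : V)} : Finset V) := by
    intro s x y z h1 h2 h3
    simp only [Finset.mem_insert, Finset.mem_singleton, inj]
    rintro (rfl | rfl | rfl) <;> contradiction
  refine ⟨c0, ?_, ?_, ?_⟩
  · intro s hs
    obtain ⟨i, rfl⟩ := sur s hs
    obtain ⟨x, hx, -, y, hxy, hy, -, z, hyz, hz, -, hxz⟩ := c1 i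
    exact ⟨_, (P x y z hxy hyz hxz).1, (P x y z hxy hyz hxz).2, Q i x y z hx hy hz⟩
  · intro s hs t ht hst ds dt
    obtain ⟨i, rfl⟩ := sur s hs
    obtain ⟨j, rfl⟩ := sur t ht
    rw [← hdg] at ds dt
    obtain ⟨⟨u, h1, h2, h3, v, h4, h5, h6, h7⟩, ⟨x, hx, hx', y, hxy, hy, hy', z, hyz, hz, hz', hxz⟩⟩ :=
      c2 i ds j (by rintro rfl; exact hst rfl) dt
    refine ⟨⟨φ u, (φ u).2, φ v, (φ v).2, (gt _ _).1 h1, (gt _ _).1 h4, ?_⟩, ?_⟩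
    · simp only [ne_eq, inj]; exact ⟨h2, h3, h5, h6, h7⟩
    · exact ⟨_, (P x y z hxy hyz hxz).1, (P x y z hxy hyz hxz).2, Q i x y z hx hy hz,
        Q j x y z hx' hy' hz'⟩
  · intro h14 s hs ds
    obtain ⟨i, rfl⟩ := sur s hs
    rw [← hdg] at ds
    obtain ⟨u, h1, x, hx, hx', y, hxy, hy, hy', z, hyz, hz, hz', hxz⟩ := c3 (by rw [hsum, h14]) i ds
    exact ⟨φ u, (φ u).2, (gt _ _).1 h1, _, (P x y z hxy hyz hxz).1, (P x y z hxy hyz hxz).2,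
      Q i x y z hx hy hz, Q u x y z hx' hy' hz'⟩

lemma Packing.add {A : Finset V} {P : Finset (Finset V)} (hP : Packing G A P) {q : Finset V}
    (hq : IsP3 G q) (hqA : q ⊆ A) (hd : ∀ r ∈ P, Disjoint q r) :
    Packing G A (insert q P) ∧ (insert q P).card = P.card + 1 := by
  have hn : q ∉ P := by
    intro h
    have := hd q h
    rw [disjoint_self] at this
    exact hq.nonempty.ne_empty this
  refine ⟨⟨?_, ?_⟩, Finset.card_insert_of_notMem hn⟩
  · intro r hr
    rcases Finset.mem_insert.1 hr with rfl | hr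
    · exact ⟨hq, hqA⟩
    · exact hP.1 r hr
  · intro r hr s hs hrs
    rw [Finset.mem_insert] at hr hs
    rcases hr with rfl | hr <;> rcases hs with rfl | hs
    · exact absurd rfl hrs
    · exact hd _ hs
    · exact (hd _ hr).symm
    · exact hP.2 r hr s hs hrs

lemma Packing.sub {A : Finset V} {P Q : Finset (Finset V)} (hP : Packing G A P) (h : Q ⊆ P) :
    Packing G A Q :=
  ⟨fun q hq => hP.1 q (h hq), fun q hq r hr => hP.2 q (h hq) r (h hr)⟩

lemma Packing.mono {A B : Finset V} {P : Finset (Finset V)} (hP : Packing G A P) (h : A ⊆ B) :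
    Packing G B P :=
  ⟨fun q hq => ⟨(hP.1 q hq).1, (hP.1 q hq).2.trans h⟩, hP.2⟩

lemma Packing.empty {A : Finset V} : Packing G A ∅ := ⟨by simp, by simp⟩

/-- the induction hypothesis/goal -/
def Good (G : SimpleGraph V) (A : Finset V) : Prop :=
  ∃ P, Packing G A P ∧ e2 G A ≤ 2 * A.card + 4 * P.card

def IH (n : ℕ) (V : Type) [DecidableEq V] : Prop :=
  ∀ (G : SimpleGraph V) (A : Finset V), A.card < n → (∀ v ∈ A, dg G A v ≤ 3) → Good G A

lemma e2_split {A S : Finset V} (h : S ⊆ A) :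
    e2 G A = e2 G S + e2 G (A \ S) + 2 * ∑ v ∈ S, dg G (A \ S) v := by
  conv_lhs => rw [← Finset.union_sdiff_of_subset h]
  rw [e2_union Finset.disjoint_sdiff]

lemma sum_split {A S : Finset V} (h : S ⊆ A) (hdeg : ∀ v ∈ A, dg G A v ≤ 3) :
    e2 G S + ∑ v ∈ S, dg G (A \ S) v ≤ 3 * S.card := by
  have : ∑ v ∈ S, dg G A v ≤ ∑ v ∈ S, 3 := Finset.sum_le_sum (fun v hv => hdeg v (h hv))
  rw [Finset.sum_const, smul_eq_mul, mul_comm] at this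
  refine le_trans (le_of_eq ?_) this
  unfold e2
  rw [← Finset.sum_add_distrib]
  refine Finset.sum_congr rfl (fun v _ => ?_)
  rw [← dg_union Finset.disjoint_sdiff, Finset.union_sdiff_of_subset h]

lemma del1 {A S q : Finset V} (ih : IH A.card V) (hS : S ⊆ A)
    (hdeg : ∀ v ∈ A, dg G A v ≤ 3) (hq : IsP3 G q) (hqS : q ⊆ S)
    (h : e2 G A ≤ e2 G (A \ S) + 2 * S.card + 4) : Good G A := by
  have hc : (A \ S).card + S.card = A.card := Finset.card_sdiff_add_card_eq_card hS
  have hp : 0 < S.card := Finset.card_pos.2 (hq.nonempty.mono hqS)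
  obtain ⟨P, hP, hP'⟩ := ih G (A \ S) (by omega) (fun v hv =>
    (dg_mono Finset.sdiff_subset v).trans (hdeg v (Finset.sdiff_subset hv)))
  obtain ⟨h1, h2⟩ := (hP.mono Finset.sdiff_subset).add hq (hqS.trans hS) (fun r hr =>
    Finset.disjoint_of_subset_left hqS
      (Finset.disjoint_of_subset_right (hP.1 r hr).2 Finset.disjoint_sdiff))
  exact ⟨_, h1, by omega⟩

lemma del2 {A S q q' : Finset V} (ih : IH A.card V) (hS : S ⊆ A)
    (hdeg : ∀ v ∈ A, dg G A v ≤ 3) (hq : IsP3 G q) (hqS : q ⊆ S) (hq' : IsP3 G q') (hqS' : q' ⊆ S)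
    (hqq : Disjoint q q')
    (h : e2 G A ≤ e2 G (A \ S) + 2 * S.card + 8) : Good G A := by
  have hc : (A \ S).card + S.card = A.card := Finset.card_sdiff_add_card_eq_card hS
  have hp : 0 < S.card := Finset.card_pos.2 (hq.nonempty.mono hqS)
  obtain ⟨P, hP, hP'⟩ := ih G (A \ S) (by omega) (fun v hv =>
    (dg_mono Finset.sdiff_subset v).trans (hdeg v (Finset.sdiff_subset hv)))
  have dj : ∀ t, t ⊆ S → ∀ r ∈ P, Disjoint t r := fun t ht r hr =>
    Finset.disjoint_of_subset_left ht
      (Finset.disjoint_of_subset_right (hP.1 r hr).2 Finset.disjoint_sdiff)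
  obtain ⟨h1, h2⟩ := (hP.mono Finset.sdiff_subset).add hq (hqS.trans hS) (dj q hqS)
  obtain ⟨h3, h4⟩ := h1.add hq' (hqS'.trans hS) (by
    intro r hr
    rcases Finset.mem_insert.1 hr with rfl | hr
    · exact hqq.symm
    · exact dj _ hqS' r hr)
  exact ⟨_, h3, by omega⟩

/-- contraction of `S` to the vertex `t` -/
def con (G : SimpleGraph V) (S : Finset V) (t : V) : SimpleGraph V where
  Adj u v := u ≠ v ∧ ((u ≠ t ∧ v ≠ t ∧ G.Adj u v) ∨ (u = t ∧ v ∉ S ∧ ∃ s ∈ S, G.Adj s v) ∨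
    (v = t ∧ u ∉ S ∧ ∃ s ∈ S, G.Adj s u))
  symm := ⟨by
    rintro u v ⟨h, h'⟩
    refine ⟨h.symm, ?_⟩
    rcases h' with ⟨h1, h2, h3⟩ | h' | h'
    · exact Or.inl ⟨h2, h1, h3.symm⟩
    · exact Or.inr (Or.inr h')
    · exact Or.inr (Or.inl h')⟩
  loopless := ⟨by rintro u ⟨h, -⟩; exact h rfl⟩

lemma con_adj_of_ne {S : Finset V} {t u v : V} (hu : u ≠ t) (hv : v ≠ t) :
    (con G S t).Adj u v ↔ G.Adj u v := by
  constructor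
  · rintro ⟨-, h | h | h⟩
    · exact h.2.2
    · exact absurd h.1 hu
    · exact absurd h.1 hv
  · intro h; exact ⟨h.ne, Or.inl ⟨hu, hv, h⟩⟩

lemma con_adj_t {S : Finset V} {t v : V} (ht : t ∈ S) :
    (con G S t).Adj t v ↔ v ∉ S ∧ ∃ s ∈ S, G.Adj s v := by
  constructor
  · rintro ⟨h0, h | h | h⟩
    · exact absurd rfl h.1
    · exact h.2
    · exact absurd h.1.symm h0
  · intro h; exact ⟨by rintro rfl; exact h.1 ht, Or.inr (Or.inl ⟨rfl, h⟩)⟩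

lemma contract {A S : Finset V} {t : V} (ih : IH A.card V) (hS : S ⊆ A) (ht : t ∈ S)
    (hdeg : ∀ v ∈ A, dg G A v ≤ 3) (h5 : S.card = 5) (h12 : e2 G S = 12)
    (hone : ∀ v ∈ A \ S, dg G S v ≤ 1)
    (lift : ∀ q, IsP3 (con G S t) q → t ∈ q → q ⊆ insert t (A \ S) → ∃ q1 q2, IsP3 G q1 ∧ IsP3 G q2 ∧
      Disjoint q1 q2 ∧ q1 ⊆ S ∪ q ∧ q2 ⊆ S ∪ q)
    (q0 : Finset V) (hq0 : IsP3 G q0) (hq0S : q0 ⊆ S) : Good G A := by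
  have hc : (A \ S).card + S.card = A.card := Finset.card_sdiff_add_card_eq_card hS
  set B := A \ S with hB
  have htB : t ∉ B := by simp [hB, ht]
  have hcard : (insert t B).card = B.card + 1 := Finset.card_insert_of_notMem htB
  have nt : ∀ v ∈ B, v ≠ t := by rintro v hv rfl; exact htB hv
  have dB : ∀ v ∈ B, dg (con G S t) B v = dg G B v := by
    intro v hv
    refine Finset.sum_congr rfl (fun w hw => ?_)
    by_cases h : G.Adj v w
    · rw [ad_one h, ad_one ((con_adj_of_ne (nt v hv) (nt w hw)).2 h)]
    · rw [ad_zero h, ad_zero (fun h' => h ((con_adj_of_ne (nt v hv) (nt w hw)).1 h'))]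
  have aB : ∀ v ∈ B, ad (con G S t) t v = dg G S v := by
    intro v hv
    have hvS : v ∉ S := (Finset.mem_sdiff.1 hv).2
    have h1 := hone v hv
    by_cases h : ∃ s ∈ S, G.Adj s v
    · obtain ⟨s, hs, h⟩ := h
      have := dg_ge_one hs h.symm
      rw [ad_one ((con_adj_t ht).2 ⟨hvS, s, hs, h⟩)]; omega
    · rw [ad_zero (fun h' => h ((con_adj_t ht).1 h').2)]
      symm
      refine Finset.sum_eq_zero (fun w hw => ad_zero (fun h' => h ⟨w, hw, h'.symm⟩))
  have dA : ∀ v, dg G A v = dg G S v + dg G B v := by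
    intro v
    rw [← dg_union Finset.disjoint_sdiff, Finset.union_sdiff_of_subset hS]
  have dt : dg (con G S t) B t = ∑ v ∈ S, dg G B v := by
    rw [sum_dg_comm]
    exact Finset.sum_congr rfl aB
  have hss := sum_split hS hdeg
  have hsp := e2_split (G := G) hS
  rw [← hB] at hss hsp
  obtain ⟨P, hP, hP'⟩ := ih (con G S t) (insert t B) (by omega) (by
    intro v hv
    rw [dg_insert htB]
    rcases Finset.mem_insert.1 hv with rfl | hv
    · rw [ad_self, dt]; omega
    · rw [ad_comm, aB v hv, dB v hv, ← dA]
      exact hdeg v (Finset.sdiff_subset hv))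
  have eB : e2 (con G S t) B = e2 G B := Finset.sum_congr rfl dB
  rw [e2_insert htB, eB, dt, hcard] at hP'
  have dj : ∀ r ∈ P, t ∉ r → r ⊆ B := by
    intro r hr htr v hv
    rcases Finset.mem_insert.1 ((hP.1 r hr).2 hv) with rfl | h
    · exact absurd hv htr
    · exact h
  have dS : ∀ r ∈ P, t ∉ r → Disjoint S r := fun r hr htr =>
    Finset.disjoint_of_subset_right (dj r hr htr) Finset.disjoint_sdiff
  have cv : ∀ r ∈ P, t ∉ r → IsP3 G r ∧ r ⊆ A := by
    intro r hr htr
    refine ⟨?_, (dj r hr htr).trans Finset.sdiff_subset⟩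
    obtain ⟨x, y, z, h, h1, h2, rfl⟩ := (hP.1 r hr).1
    simp only [Finset.mem_insert, Finset.mem_singleton, not_or] at htr
    exact isP3_mk h ((con_adj_of_ne (Ne.symm htr.1) (Ne.symm htr.2.1)).1 h1)
      ((con_adj_of_ne (Ne.symm htr.2.1) (Ne.symm htr.2.2)).1 h2)
  by_cases hex : ∃ q ∈ P, t ∈ q
  · obtain ⟨q, hq, htq⟩ := hex
    have hnt : ∀ r ∈ P.erase q, t ∉ r := by
      intro r hr htr
      obtain ⟨hrq, hr⟩ := Finset.mem_erase.1 hr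
      exact Finset.disjoint_left.1 (hP.2 r hr q hq hrq) htr htq
    have hpk : Packing G A (P.erase q) :=
      ⟨fun r hr => cv r (Finset.mem_of_mem_erase hr) (hnt r hr),
        (hP.sub (Finset.erase_subset _ _)).2⟩
    have hqA : q ⊆ A := (hP.1 q hq).2.trans (Finset.insert_subset (hS ht) Finset.sdiff_subset)
    obtain ⟨q1, q2, h1, h2, h12', hs1, hs2⟩ := lift q (hP.1 q hq).1 htq (hP.1 q hq).2
    have dj' : ∀ r ∈ P.erase q, Disjoint (S ∪ q) r := by
      intro r hr
      obtain ⟨hrq, hr'⟩ := Finset.mem_erase.1 hr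
      exact Finset.disjoint_union_left.2 ⟨dS r hr' (hnt r hr), hP.2 q hq r hr' (Ne.symm hrq)⟩
    obtain ⟨k1, k2⟩ := hpk.add h1 (hs1.trans (Finset.union_subset hS hqA)) (fun r hr =>
      Finset.disjoint_of_subset_left hs1 (dj' r hr))
    obtain ⟨k3, k4⟩ := k1.add h2 (hs2.trans (Finset.union_subset hS hqA)) (by
      intro r hr
      rcases Finset.mem_insert.1 hr with rfl | hr
      · exact h12'.symm
      · exact Finset.disjoint_of_subset_left hs2 (dj' r hr))
    have := Finset.card_erase_add_one hq
    exact ⟨_, k3, by omega⟩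
  · push Not at hex
    have hpk : Packing G A P := ⟨fun r hr => cv r hr (hex r hr), hP.2⟩
    obtain ⟨k1, k2⟩ := hpk.add hq0 (hq0S.trans hS) (fun r hr =>
      Finset.disjoint_of_subset_left hq0S (dS r hr (hex r hr)))
    exact ⟨_, k1, by omega⟩

end
end P3
namespace P3
section
variable {V : Type} [DecidableEq V] {G : SimpleGraph V}

lemma dg_two_exists {T : Finset V} {v : V} (h : 2 ≤ dg G T v) :
    ∃ s ∈ T, ∃ t ∈ T, s ≠ t ∧ G.Adj v s ∧ G.Adj v t := by
  obtain ⟨s, hs, hvs⟩ := dg_pos (by omega : 0 < dg G T v)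
  have h1 : dg G T v = ad G v s + dg G (T.erase s) v := by
    rw [← dg_insert (Finset.notMem_erase s T), Finset.insert_erase hs]
  have := ad_le (G := G) v s
  obtain ⟨t, ht, hvt⟩ := dg_pos (by omega : 0 < dg G (T.erase s) v)
  exact ⟨s, hs, t, Finset.mem_of_mem_erase ht, (Finset.ne_of_mem_erase ht).symm, hvs, hvt⟩

lemma disj3 {q : Finset V} {x y z : V} (hx : x ∉ q) (hy : y ∉ q) (hz : z ∉ q) :
    Disjoint ({x, y, z} : Finset V) q := by
  simp [hx, hy, hz]

lemma sub3 {q : Finset V} {x y z : V} (hx : x ∈ q) (hy : y ∈ q) (hz : z ∈ q) :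
    ({x, y, z} : Finset V) ⊆ q := by
  simp [Finset.insert_subset_iff, hx, hy, hz]

lemma five_case {A S : Finset V} (ih : IH A.card V) (hS : S ⊆ A)
    (hdeg : ∀ v ∈ A, dg G A v ≤ 3) (h5 : S.card = 5) (h12 : 12 ≤ e2 G S)
    (h1 : ∀ v ∈ S, 1 ≤ dg G S v) : Good G A := by
  obtain ⟨c0, c1, c2, c3⟩ := five S h5 h12
    (fun v hv => ⟨(dg_mono hS v).trans (hdeg v (hS hv)), h1 v hv⟩)
  have lt3 : ∀ s ∈ S, ∀ w ∈ A, w ∉ S → G.Adj s w → dg G S s < 3 := by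
    intro s hs w hw hwS h
    have a1 := dg_mono (G := G) (Finset.insert_subset hw hS) s
    rw [dg_insert hwS, ad_one h] at a1
    have := hdeg s (hS hs)
    omega
  have key : ∀ w ∈ A, w ∉ S → 16 ≤ e2 G (insert w S) →
      e2 G A ≤ e2 G (A \ insert w S) + 2 * (insert w S).card + 8 := by
    intro w hw hwS h16
    have b1 := e2_split (G := G) (Finset.insert_subset hw hS)
    have b2 := sum_split (Finset.insert_subset hw hS) hdeg
    have b3 : (insert w S).card = 6 := by rw [Finset.card_insert_of_notMem hwS, h5]
    omega
  obtain ⟨s0, hs0⟩ : S.Nonempty := Finset.card_pos.1 (by omega)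
  obtain ⟨q0, hq0, hq0S, -⟩ := c1 s0 hs0
  by_cases hA : ∃ w ∈ A, w ∉ S ∧ 2 ≤ dg G S w
  · obtain ⟨w, hw, hwS, hw2⟩ := hA
    obtain ⟨s, hs, t, ht, hst, hws, hwt⟩ := dg_two_exists hw2
    obtain ⟨-, q, hq, hqS, hsq, htq⟩ := c2 s hs t ht hst (lt3 s hs w hw hwS hws.symm)
      (lt3 t ht w hw hwS hwt.symm)
    refine del2 ih (Finset.insert_subset hw hS) hdeg (isP3_mk hst hws.symm hwt) ?_ hq
      (hqS.trans (Finset.subset_insert _ _)) ?_ (key w hw hwS ?_)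
    · exact sub3 (by simp [hs]) (by simp) (by simp [ht])
    · exact disj3 hsq (fun h => hwS (hqS h)) htq
    · rw [e2_insert hwS]; omega
  push Not at hA
  rcases c0 with e12 | e14
  · refine contract ih hS hs0 hdeg h5 e12 ?_ ?_ q0 hq0 hq0S
    · intro v hv
      obtain ⟨hv1, hv2⟩ := Finset.mem_sdiff.1 hv
      have := hA v hv1 hv2
      omega
    · -- lifting
      have endc : ∀ a b, a ≠ s0 → b ≠ s0 → a ∈ A → b ∈ A → a ∉ S → b ∉ S → s0 ≠ b →
          (con G S s0).Adj s0 a → (con G S s0).Adj a b →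
          ∃ q1 q2, IsP3 G q1 ∧ IsP3 G q2 ∧ Disjoint q1 q2 ∧ q1 ⊆ S ∪ {s0, a, b} ∧
            q2 ⊆ S ∪ {s0, a, b} := by
        intro a b ha hb haA hbA haS hbS hsb h1 h2
        obtain ⟨-, s, hs, hsa⟩ := (con_adj_t hs0).1 h1
        rw [con_adj_of_ne ha hb] at h2
        obtain ⟨q, hq, hqS, hsq⟩ := c1 s hs
        refine ⟨{s, a, b}, q, isP3_mk (by rintro rfl; exact hbS hs) hsa h2, hq,
          disj3 hsq (fun h => haS (hqS h)) (fun h => hbS (hqS h)), ?_, hqS.trans Finset.subset_union_left⟩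
        exact sub3 (by simp [hs]) (by simp) (by simp)
      rintro q ⟨x, y, z, hxz, hxy, hyz, rfl⟩ htq hsub
      have mem : ∀ v ∈ ({x, y, z} : Finset V), v ≠ s0 → v ∈ A ∧ v ∉ S := by
        intro v hv hne
        rcases Finset.mem_insert.1 (hsub hv) with h | h
        · exact absurd h hne
        · exact Finset.mem_sdiff.1 h
      have hxy' := hxy.ne
      have hyz' := hyz.ne
      simp only [Finset.mem_insert, Finset.mem_singleton] at htq
      rcases htq with htq | htq | htq
      · subst htq
        obtain ⟨m1, m2⟩ := mem y (by simp) hxy'.symm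
        obtain ⟨m3, m4⟩ := mem z (by simp) hxz.symm
        exact endc y z hxy'.symm hxz.symm m1 m3 m2 m4 hxz hxy hyz
      · subst htq
        obtain ⟨m1, m2⟩ := mem x (by simp) hxy'
        obtain ⟨m3, m4⟩ := mem z (by simp) hyz'.symm
        obtain ⟨-, s, hs, hsx⟩ := (con_adj_t hs0).1 hxy.symm
        obtain ⟨-, s', hs', hsz⟩ := (con_adj_t hs0).1 hyz
        by_cases hss : s = s'
        · subst hss
          obtain ⟨q, hq, hqS, hsq⟩ := c1 s hs
          refine ⟨{x, s, z}, q, isP3_mk hxz hsx.symm hsz, hq,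
            disj3 (fun h => m2 (hqS h)) hsq (fun h => m4 (hqS h)),
            sub3 (by simp) (by simp [hs]) (by simp), hqS.trans Finset.subset_union_left⟩
        · obtain ⟨⟨u, hu, v, hv, hsu, hsv, n1, n2, n3, n4, n5⟩, -⟩ := c2 s hs s' hs' hss
            (lt3 s hs x m1 m2 hsx) (lt3 s' hs' z m3 m4 hsz)
          have xs : ∀ w ∈ S, x ≠ w := by rintro w hw rfl; exact m2 hw
          have zs : ∀ w ∈ S, z ≠ w := by rintro w hw rfl; exact m4 hw
          refine ⟨{x, s, u}, {z, s', v}, isP3_mk (xs u hu) hsx.symm hsu,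
            isP3_mk (zs v hv) hsz.symm hsv, disj3 ?_ ?_ ?_,
            sub3 (by simp) (by simp [hs]) (by simp [hu]),
            sub3 (by simp) (by simp [hs']) (by simp [hv])⟩
          · simp [hxz, xs s' hs', xs v hv]
          · simp [(zs s hs).symm, hss, n3.symm]
          · simp [(zs u hu).symm, n2, n5]
      · rw [← htq] at hxz hyz hyz' ⊢
        obtain ⟨m1, m2⟩ := mem x (by simp) hxz
        obtain ⟨m3, m4⟩ := mem y (by simp) hyz'
        have := endc y x hyz' hxz m3 m1 m4 m2 hxz.symm hyz.symm hxy.symm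
        have e : ({s0, y, x} : Finset V) = {x, y, s0} := by
          ext v; simp only [Finset.mem_insert, Finset.mem_singleton]; tauto
        rwa [e] at this
  · by_cases hB : ∃ s ∈ S, ∃ w ∈ A, w ∉ S ∧ G.Adj s w
    · obtain ⟨s, hs, w, hw, hwS, hsw⟩ := hB
      obtain ⟨u, hu, hsu, q, hq, hqS, hsq, huq⟩ := c3 e14 s hs (lt3 s hs w hw hwS hsw)
      refine del2 ih (Finset.insert_subset hw hS) hdeg
        (isP3_mk (by rintro rfl; exact hwS hu) hsw.symm hsu) ?_ hq
        (hqS.trans (Finset.subset_insert _ _)) ?_ (key w hw hwS ?_)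
      · exact sub3 (by simp) (by simp [hs]) (by simp [hu])
      · exact disj3 (fun h => hwS (hqS h)) hsq huq
      · have := dg_ge_one hs hsw.symm
        rw [e2_insert hwS]; omega
    · push Not at hB
      have z : ∑ v ∈ S, dg G (A \ S) v = 0 :=
        Finset.sum_eq_zero (fun v hv => Finset.sum_eq_zero (fun w hw =>
          ad_zero (hB v hv w (Finset.mem_sdiff.1 hw).1 (Finset.mem_sdiff.1 hw).2)))
      have := e2_split (G := G) hS
      exact del1 ih hS hdeg hq0 hq0S (by omega)

/-- potential -/
noncomputable def Phi (G : SimpleGraph V) (A : Finset V) (P : Finset (Finset V)) : ℕ :=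
  2 * ∑ q ∈ P, e2 G q + e2 G (A \ P.biUnion id)

lemma exists_best (A : Finset V) : ∃ P, Packing G A P ∧
    (∀ Q, Packing G A Q → Q.card ≤ P.card) ∧
    (∀ Q, Packing G A Q → Q.card = P.card → Phi G A Q ≤ Phi G A P) := by
  classical
  let F := A.powerset.powerset.filter (fun P => Packing G A P)
  have hF : ∀ P, P ∈ F ↔ Packing G A P := by
    intro P
    simp only [F, Finset.mem_filter, Finset.mem_powerset, and_iff_right_iff_imp]
    intro h q hq
    exact Finset.mem_powerset.2 (h.1 q hq).2
  obtain ⟨P0, h0, h0'⟩ := Finset.exists_max_image F Finset.card ⟨∅, (hF _).2 Packing.empty⟩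
  obtain ⟨P, h1, h1'⟩ := Finset.exists_max_image (F.filter (fun P => P.card = P0.card)) (Phi G A)
    ⟨P0, by simp [h0]⟩
  obtain ⟨h1, h2⟩ := Finset.mem_filter.1 h1
  refine ⟨P, (hF _).1 h1, fun Q hQ => ?_, fun Q hQ hc => ?_⟩
  · rw [h2]; exact h0' Q ((hF _).2 hQ)
  · exact h1' Q (Finset.mem_filter.2 ⟨(hF _).2 hQ, by omega⟩)

lemma step {A : Finset V} (ih : IH A.card V) (hdeg : ∀ v ∈ A, dg G A v ≤ 3) : Good G A := by
  obtain ⟨P, hP, hmax, hphi⟩ := exists_best (G := G) A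
  set W := P.biUnion id with hW
  set U := A \ W with hU
  have hWA : W ⊆ A := by
    intro v hv
    obtain ⟨q, hq, hv⟩ := Finset.mem_biUnion.1 hv
    exact (hP.1 q hq).2 hv
  have hpW : ∀ p ∈ P, p ⊆ W := fun p hp => Finset.subset_biUnion_of_mem id hp
  have hUp : ∀ p ∈ P, Disjoint p U := fun p hp =>
    Finset.disjoint_of_subset_left (hpW p hp) Finset.disjoint_sdiff
  have R0 : ∀ q, IsP3 G q → q ⊆ U → False := by
    intro q hq hqU
    obtain ⟨h1, h2⟩ := hP.add hq (hqU.trans Finset.sdiff_subset) (fun r hr =>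
      (Finset.disjoint_of_subset_right hqU (hUp r hr)).symm)
    have := hmax _ h1
    omega
  have hpU : ∀ p ∈ P, p ∪ U ⊆ A := fun p hp =>
    Finset.union_subset (hP.1 p hp).2 Finset.sdiff_subset
  have dj : ∀ p ∈ P, ∀ r ∈ P.erase p, Disjoint (p ∪ U) r := by
    intro p hp r hr
    obtain ⟨h1, h2⟩ := Finset.mem_erase.1 hr
    exact Finset.disjoint_union_left.2 ⟨hP.2 p hp r h2 h1.symm, (hUp r h2).symm⟩
  have ex : ∀ p ∈ P, ∀ q, IsP3 G q → q ⊆ p ∪ U →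
      Packing G A (insert q (P.erase p)) ∧ (insert q (P.erase p)).card = P.card := by
    intro p hp q hq hqs
    obtain ⟨h1, h2⟩ := (hP.sub (Finset.erase_subset p P)).add hq (hqs.trans (hpU p hp))
      (fun r hr => Finset.disjoint_of_subset_left hqs (dj p hp r hr))
    exact ⟨h1, by rw [h2, Finset.card_erase_add_one hp]⟩
  have R1 : ∀ p ∈ P, ∀ q r, IsP3 G q → IsP3 G r → q ⊆ p ∪ U → r ⊆ p ∪ U → Disjoint q r → False := by
    intro p hp q r hq hr hqs hrs hqr
    obtain ⟨h1, h2⟩ := ex p hp q hq hqs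
    obtain ⟨h3, h4⟩ := h1.add hr (hrs.trans (hpU p hp)) (by
      intro r' hr'
      rcases Finset.mem_insert.1 hr' with rfl | hr'
      · exact hqr.symm
      · exact Finset.disjoint_of_subset_left hrs (dj p hp r' hr'))
    have := hmax _ h3
    omega
  have R2 : ∀ p ∈ P, ∀ q, IsP3 G q → q ⊆ p ∪ U →
      2 * e2 G q + e2 G ((p ∪ U) \ q) ≤ 2 * e2 G p + e2 G U := by
    intro p hp q hq hqs
    obtain ⟨h1, h2⟩ := ex p hp q hq hqs
    have h3 := hphi _ h1 h2
    unfold Phi at h3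
    have hn : q ∉ P.erase p := by
      intro h
      have := Finset.disjoint_of_subset_left hqs (dj p hp q h)
      rw [disjoint_self] at this
      exact hq.nonempty.ne_empty this
    rw [Finset.sum_insert hn, ← Finset.add_sum_erase P (fun q => e2 G q) hp] at h3
    have hset : A \ (insert q (P.erase p)).biUnion id = (p ∪ U) \ q := by
      ext v
      simp only [Finset.mem_sdiff, Finset.mem_biUnion, Finset.mem_union, hU, hW, id,
        Finset.mem_insert, Finset.mem_erase, not_exists, not_and]
      constructor
      · rintro ⟨hvA, hv⟩
        refine ⟨?_, hv q (Or.inl rfl)⟩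
        by_cases hvp : v ∈ p
        · exact Or.inl hvp
        · refine Or.inr ⟨hvA, fun r hr => ?_⟩
          by_cases hrp : r = p
          · rwa [hrp]
          · exact hv r (Or.inr ⟨hrp, hr⟩)
      · rintro ⟨hv | ⟨hvA, hv⟩, hvq⟩
        · refine ⟨(hP.1 p hp).2 hv, ?_⟩
          rintro r (rfl | ⟨hrp, hr⟩)
          · exact hvq
          · exact Finset.disjoint_left.1 (hP.2 p hp r hr (Ne.symm hrp)) hv
        · refine ⟨hvA, ?_⟩
          rintro r (rfl | ⟨hrp, hr⟩)
          · exact hvq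
          · exact hv r hr
    rw [hset, ← hW, ← hU] at h3
    omega
  by_cases hch : ∀ p ∈ P, ∑ u ∈ U, (2 + dg G U u) * dg G p u ≤ 6
  · -- discharging
    refine ⟨P, hP, ?_⟩
    have pd : (P : Set (Finset V)).PairwiseDisjoint id := fun q hq r hr h => hP.2 q hq r hr h
    have cW : W.card = 3 * P.card := by
      have hc : ∑ q ∈ P, q.card = ∑ q ∈ P, 3 :=
        Finset.sum_congr rfl (fun q hq => (hP.1 q hq).1.card)
      rw [hW, Finset.card_biUnion pd]
      simp only [id]
      rw [hc]
      simp [mul_comm]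
    have cU : U.card + W.card = A.card := Finset.card_sdiff_add_card_eq_card hWA
    have dW : ∀ u, dg G W u = ∑ p ∈ P, dg G p u := by
      intro u
      unfold dg
      rw [hW, Finset.sum_biUnion pd]
      rfl
    have dU : ∀ u ∈ U, dg G U u ≤ 1 := by
      intro u hu
      by_contra h
      obtain ⟨s, hs, t, ht, hst, h1, h2⟩ := dg_two_exists (by omega : 2 ≤ dg G U u)
      exact R0 _ (isP3_mk hst h1.symm h2) (sub3 hs hu ht)
    have pt : ∀ u ∈ U, 6 * dg G A u ≤ 12 + (2 + dg G U u) * dg G W u := by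
      intro u hu
      have h1 : dg G A u = dg G W u + dg G U u := by
        rw [← dg_union Finset.disjoint_sdiff, Finset.union_sdiff_of_subset hWA]
      have h2 := hdeg u (Finset.sdiff_subset hu)
      have h3 := dU u hu
      rw [h1] at h2 ⊢
      generalize dg G W u = a at *
      generalize dg G U u = b at *
      have : b = 0 ∨ b = 1 := by omega
      rcases this with rfl | rfl <;> omega
    have s1 : 6 * ∑ u ∈ U, dg G A u ≤ 12 * U.card + 6 * P.card := by
      calc 6 * ∑ u ∈ U, dg G A u = ∑ u ∈ U, 6 * dg G A u := Finset.mul_sum _ _ _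
        _ ≤ ∑ u ∈ U, (12 + (2 + dg G U u) * dg G W u) := Finset.sum_le_sum pt
        _ = 12 * U.card + ∑ p ∈ P, ∑ u ∈ U, (2 + dg G U u) * dg G p u := by
          rw [Finset.sum_add_distrib, Finset.sum_const, smul_eq_mul, mul_comm, Finset.sum_comm]
          simp only [dW, Finset.mul_sum]
        _ ≤ 12 * U.card + ∑ p ∈ P, 6 := by
          gcongr with p hp
          exact hch p hp
        _ = 12 * U.card + 6 * P.card := by simp [mul_comm]
    have s2 : ∑ u ∈ W, dg G A u ≤ 3 * W.card := by
      calc ∑ u ∈ W, dg G A u ≤ ∑ u ∈ W, 3 := Finset.sum_le_sum (fun v hv => hdeg v (hWA hv))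
        _ = 3 * W.card := by simp [mul_comm]
    have s3 : e2 G A = ∑ u ∈ U, dg G A u + ∑ u ∈ W, dg G A u := (Finset.sum_sdiff hWA).symm
    omega
  · push Not at hch
    obtain ⟨p, hp, hlt⟩ := hch
    obtain ⟨x, y, z, hxz, hxy, hyz, hpe⟩ := (hP.1 p hp).1
    have hd' : ∀ v ∈ p ∪ U, dg G (p ∪ U) v ≤ 3 := fun v hv =>
      (dg_mono (hpU p hp) v).trans (hdeg v (hpU p hp hv))
    rcases local_bound U p x y z hpe hxz hxy hyz (hUp p hp) hd' R0 (R1 p hp) (R2 p hp) with h | h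
    · omega
    · obtain ⟨a, ha, b, hb, hab, h12, ⟨w, hw, haw⟩, ⟨w', hw', hbw⟩⟩ := h
      have hap : a ∉ p := fun h => Finset.disjoint_left.1 (hUp p hp) h ha
      have hbp : b ∉ p := fun h => Finset.disjoint_left.1 (hUp p hp) h hb
      have hsub : p ∪ {a, b} ⊆ A := by
        refine Finset.union_subset (hP.1 p hp).2 ?_
        intro v hv
        simp only [Finset.mem_insert, Finset.mem_singleton] at hv
        rcases hv with rfl | rfl
        · exact Finset.sdiff_subset ha
        · exact Finset.sdiff_subset hb
      refine five_case ih hsub hdeg ?_ h12 ?_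
      · rw [Finset.card_union_of_disjoint (by simp [hap, hbp]), (hP.1 p hp).1.card,
          Finset.card_pair hab]
      · intro v hv
        have px : x ∈ p := by simp [hpe]
        have py : y ∈ p := by simp [hpe]
        rcases Finset.mem_union.1 hv with hv | hv
        · rw [hpe] at hv
          simp only [Finset.mem_insert, Finset.mem_singleton] at hv
          rcases hv with rfl | rfl | rfl
          · exact dg_ge_one (Finset.mem_union_left _ py) hxy
          · exact dg_ge_one (Finset.mem_union_left _ px) hxy.symm
          · exact dg_ge_one (Finset.mem_union_left _ py) hyz.symm
        · simp only [Finset.mem_insert, Finset.mem_singleton] at hv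
          rcases hv with rfl | rfl
          · exact dg_ge_one (Finset.mem_union_left _ hw) haw
          · exact dg_ge_one (Finset.mem_union_left _ hw') hbw

lemma all_good (n : ℕ) : IH n V := by
  induction n with
  | zero => intro G A h; omega
  | succ n ihn =>
    intro G A hA hdeg
    refine step (fun G' B hB => ihn G' B (by omega)) hdeg

lemma exists_sub {q : Finset V} (hq : IsP3 G q) :
    ∃ H : G.Subgraph, H.IsKEdgePath 2 ∧ H.verts = (q : Set V) := by
  obtain ⟨x, y, z, hxz, hxy, hyz, rfl⟩ := hq
  let w : G.Walk x z := SimpleGraph.Walk.cons hxy (SimpleGraph.Walk.cons hyz SimpleGraph.Walk.nil)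
  refine ⟨w.toSubgraph, ⟨x, z, w, ?_, rfl, rfl⟩, ?_⟩
  · simp [w, SimpleGraph.Walk.isPath_def, hxy.ne, hyz.ne, hxz]
  · rw [SimpleGraph.Walk.verts_toSubgraph]
    ext v
    simp [w]

lemma lambda_ge [Fintype V] {P : Finset (Finset V)} (hP : Packing G Finset.univ P) :
    P.card ≤ G.lambdaK 2 := by
  classical
  have hex : ∀ q : {q // q ∈ P}, ∃ H : G.Subgraph, H.IsKEdgePath 2 ∧ H.verts = (q.1 : Set V) :=
    fun q => exists_sub (hP.1 q.1 q.2).1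
  choose f hf1 hf2 using hex
  have inj : Function.Injective f := by
    intro q r h
    have : (q.1 : Set V) = r.1 := by rw [← hf2, ← hf2, h]
    exact Subtype.ext (Finset.coe_injective this)
  refine le_csSup ?_ ⟨P.attach.image f, ?_, ?_, ?_⟩
  · refine ⟨Nat.card G.Subgraph, ?_⟩
    rintro n ⟨Q, -, -, rfl⟩
    have : Fintype G.Subgraph := Fintype.ofFinite _
    rw [Nat.card_eq_fintype_card]
    exact Finset.card_le_univ Q
  · intro H hH
    obtain ⟨q, -, rfl⟩ := Finset.mem_image.1 hH
    exact hf1 q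
  · intro H hH H' hH' hne
    obtain ⟨q, -, rfl⟩ := Finset.mem_image.1 hH
    obtain ⟨r, -, rfl⟩ := Finset.mem_image.1 hH'
    simp only [hf2]
    rw [Finset.disjoint_coe]
    exact hP.2 q.1 q.2 r.1 r.2 (fun h => hne (by rw [Subtype.ext h]))
  · rw [Finset.card_image_of_injective _ inj, Finset.card_attach]

end
end P3

/-- Let `G` be a finite simple cubic graph (every vertex has degree exactly 3).
Then `λ(G) ≥ v(G)/4`. -/
theorem stmt_3 {V : Type} [Fintype V] (G : SimpleGraph V) [DecidableRel G.Adj]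
    (hdeg : ∀ v : V, G.degree v = 3) :
    (G.lambdaK 2 : ℚ) ≥ (Fintype.card V : ℚ) / 4 := by
  classical
  have hd : ∀ v, P3.dg G Finset.univ v = 3 := by
    intro v
    rw [← hdeg v, ← SimpleGraph.card_neighborFinset_eq_degree, SimpleGraph.neighborFinset_eq_filter,
      Finset.card_filter]
    refine Finset.sum_congr rfl (fun w _ => ?_)
    by_cases h : G.Adj v w <;> simp [P3.ad, h]
  obtain ⟨P, hP, h⟩ := P3.all_good (V := V) _ G Finset.univ (Nat.lt_succ_self _)
    (fun v _ => (hd v).le)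
  have he : P3.e2 G Finset.univ = 3 * Fintype.card V := by
    unfold P3.e2
    simp [hd, mul_comm]
  have hl := P3.lambda_ge hP
  rw [he, Finset.card_univ] at h
  have h4 : Fintype.card V ≤ 4 * G.lambdaK 2 := by omega
  have h5 : (Fintype.card V : ℚ) ≤ 4 * (G.lambdaK 2 : ℚ) := by exact_mod_cast h4
  linarith
end

section
/- Let k ≥ 1 and s ≥ 1 be integers and let T be a finite tree in which every non-leaf vertex has degree exactly s; assume v(T) = 2 if s = 1, and that T has at least one non-leaf vertex if s ≥ 2. Let T_k be the graph obtained from T by subdividing every non-dangling edge with exactly k new vertices and every dangling edge with exactly k−1 new vertices. Then λ_k(T_k) = τ_k(T_k) = (v(T_k) − k)/(sk − k + 1). -/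
/-- `G'` is obtained from `G` by subdividing each edge `e` of `G` with exactly `f e`
new vertices; `ι` is the embedding of the original (branch) vertices into `G'`.
Each edge `uv` of `G` is replaced by a path `P h` of length `f s(u,v) + 1` from `ι u`
to `ι v`, whose internal vertices are new, these paths are internally disjoint,
they cover all vertices of `G'`, and their edges are exactly the edges of `G'`. -/
def SimpleGraph.IsSubdivision {V V' : Type*} (G : SimpleGraph V) (G' : SimpleGraph V')
    (ι : V → V') (f : Sym2 V → ℕ) : Prop :=
  Function.Injective ι ∧
  ∃ P : ∀ ⦃u v : V⦄, G.Adj u v → G'.Walk (ι u) (ι v),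
    (∀ ⦃u v⦄ (h : G.Adj u v), (P h).IsPath) ∧
    (∀ ⦃u v⦄ (h : G.Adj u v), (P h).length = f s(u, v) + 1) ∧
    (∀ ⦃u v⦄ (h : G.Adj u v), P h.symm = (P h).reverse) ∧
    (∀ ⦃u v⦄ (h : G.Adj u v), ∀ z ∈ (P h).support, z ∈ Set.range ι → z = ι u ∨ z = ι v) ∧
    (∀ x : V', x ∈ Set.range ι ∨ ∃ (u v : V) (h : G.Adj u v), x ∈ (P h).support) ∧
    (∀ ⦃u v u' v' : V⦄ (h : G.Adj u v) (h' : G.Adj u' v'), s(u, v) ≠ s(u', v') →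
      ∀ z : V', z ∈ (P h).support → z ∈ (P h').support → z ∈ Set.range ι) ∧
    (∀ e : Sym2 V', e ∈ G'.edgeSet ↔ ∃ (u v : V) (h : G.Adj u v), e ∈ (P h).edges)

theorem aux_path_tree {V : Type} [Finite V] {G : SimpleGraph V} {H : G.Subgraph} {k : ℕ}
    (h : H.IsKEdgePath k) : H.IsKEdgeTree k := by
  classical
  obtain ⟨u, v, w, hp, hl, rfl⟩ := h
  have e1 : w.toSubgraph.edgeSet.ncard = k := by
    rw [SimpleGraph.Walk.edgeSet_toSubgraph]
    have : w.edgeSet = (w.edges.toFinset : Set (Sym2 V)) := by ext; simp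
    rw [this, Set.ncard_coe_finset, List.toFinset_card_of_nodup hp.isTrail.edges_nodup]
    simp [hl]
  have e2 : w.toSubgraph.verts.ncard = k + 1 := by
    have : w.toSubgraph.verts = (w.support.toFinset : Set V) := by ext; simp
    rw [this, Set.ncard_coe_finset, List.toFinset_card_of_nodup hp.support_nodup]
    simp [hl]
  refine ⟨?_, e1⟩
  rw [SimpleGraph.isTree_iff_connected_and_card]
  refine ⟨w.toSubgraph_connected.coe, ?_⟩
  rw [Nat.card_coe_set_eq, Nat.card_coe_set_eq, e2, ← e1, ← SimpleGraph.Subgraph.image_coe_edgeSet_coe,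
    Set.ncard_image_of_injective _ (Sym2.map.injective Subtype.val_injective)]

theorem aux_tree_card {V : Type} [Finite V] {G : SimpleGraph V} {H : G.Subgraph} {k : ℕ}
    (h : H.IsKEdgeTree k) : H.verts.ncard = k + 1 := by
  obtain ⟨h1, h2⟩ := h
  rw [SimpleGraph.isTree_iff_connected_and_card] at h1
  have := h1.2
  rw [Nat.card_coe_set_eq, Nat.card_coe_set_eq] at this
  rw [← this, ← h2, ← SimpleGraph.Subgraph.image_coe_edgeSet_coe,
    Set.ncard_image_of_injective _ (Sym2.map.injective Subtype.val_injective)]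

/-- rooting a tree -/
theorem aux_root {V : Type} [Fintype V] (T : SimpleGraph V) (hT : T.IsTree) (l : V) :
    ∃ par : V → V, (∀ v, v ≠ l → T.Adj v (par v)) ∧
      (∀ v w, v ≠ l → w ≠ l → s(v, par v) = s(w, par w) → v = w) ∧
      (∀ u v, T.Adj u v → ∃ w, w ≠ l ∧ s(w, par w) = s(u, v)) := by
  classical
  have h1 : ∀ v, ∃ p, v ≠ l → T.Adj v p ∧ T.dist v l = T.dist p l + 1 := by
    intro v
    by_cases hv : v = l
    · exact ⟨v, fun h => absurd hv h⟩
    obtain ⟨w, hw⟩ := hT.connected.exists_walk_length_eq_dist v l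
    cases w with
    | nil => exact absurd rfl hv
    | @cons _ p _ h q =>
      refine ⟨p, fun _ => ⟨h, ?_⟩⟩
      have a := T.dist_le q
      have b := hT.connected.dist_triangle (u := v) (v := p) (w := l)
      rw [SimpleGraph.dist_eq_one_iff_adj.2 h] at b
      simp at hw
      omega
  choose par hpar using h1
  have inj : ∀ v w, v ≠ l → w ≠ l → s(v, par v) = s(w, par w) → v = w := by
    intro v w hv hw h
    rw [Sym2.eq_iff] at h
    rcases h with h | h
    · exact h.1
    · have a := (hpar v hv).2
      have b := (hpar w hw).2
      rw [h.2] at a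
      rw [← h.1] at b
      omega
  refine ⟨par, fun v hv => (hpar v hv).1, inj, ?_⟩
  have hc := hT.card_edgeFinset
  have himg : (Finset.univ.erase l).image (fun v => s(v, par v)) = T.edgeFinset := by
    apply Finset.eq_of_subset_of_card_le
    · intro e he
      simp only [Finset.mem_image, Finset.mem_erase] at he
      obtain ⟨v, hv, rfl⟩ := he
      simpa using (hpar v hv.1).1
    · rw [Finset.card_image_of_injOn, Finset.card_erase_of_mem (Finset.mem_univ _), Finset.card_univ]
      · omega
      · intro v hv w hw h
        exact inj v w (by simpa using hv) (by simpa using hw) h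
  intro u v h
  have : s(u, v) ∈ T.edgeFinset := by simpa using h
  rw [← himg] at this
  simp only [Finset.mem_image, Finset.mem_erase] at this
  obtain ⟨w, hw, e⟩ := this
  exact ⟨w, hw.1, e⟩

theorem aux_supp_mem {V : Type} {G : SimpleGraph V} {u v x : V} (w : G.Walk u v) (k : ℕ)
    (hp : w.IsPath) (hk : k < w.length) (hx : x ∈ (w.take k).support) : x ≠ v := by
  rintro rfl
  rw [SimpleGraph.Walk.mem_support_iff_exists_getVert] at hx
  obtain ⟨n, hn, hl⟩ := hx
  rw [SimpleGraph.Walk.take_getVert] at hn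
  have := hp.getVert_injOn (x₁ := min k n) (x₂ := w.length) (by simp; omega) (by simp) (by simp [hn])
  omega

theorem aux_core {V V' : Type} [Fintype V] [Fintype V'] (k s : ℕ) (hk : 1 ≤ k) (hs : 1 ≤ s)
    (T : SimpleGraph V) [DecidableRel T.Adj] (hT : T.IsTree) (R : Finset V) (l : V) (hl : l ∉ R)
    (hdR : ∀ v ∈ R, T.degree v = s) (hdL : ∀ v, v ∉ R → T.degree v = 1)
    (hcov : ∀ u v, T.Adj u v → u ∈ R ∨ v ∈ R)
    (Tk : SimpleGraph V') (ι : V → V') (f : Sym2 V → ℕ)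
    (hf1 : ∀ u v : V, T.Adj u v → u ∈ R → v ∈ R → f s(u, v) = k)
    (hf2 : ∀ u v : V, T.Adj u v → v ∉ R → f s(u, v) = k - 1)
    (hsub : T.IsSubdivision Tk ι f) :
    Tk.lambdaK k = R.card ∧ Tk.tauK k = R.card ∧
      Fintype.card V' = R.card * ((s - 1) * k + 1) + k := by
  classical
  obtain ⟨hι, P, hP, hlen, hrev, hran, hcover, hdisj, hedge⟩ := hsub
  obtain ⟨par, hpar, hinj, hsurj⟩ := aux_root T hT l
  have hsame : ∀ ⦃u v u' v' : V⦄ (h : T.Adj u v) (h' : T.Adj u' v'), s(u, v) = s(u', v') →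
      ∀ x, x ∈ (P h).support → x ∈ (P h').support := by
    intro u v u' v' h h' e x hx
    rw [Sym2.eq_iff] at e
    rcases e with ⟨rfl, rfl⟩ | ⟨rfl, rfl⟩
    · exact hx
    · have := hrev h
      rw [this]; simpa using hx
  have huniq : ∀ v a b, v ∉ R → T.Adj v a → T.Adj v b → a = b := by
    intro v a b hv ha hb
    have := SimpleGraph.degree_eq_one_iff_existsUnique_adj.1 (hdL v hv)
    exact this.unique ha hb
  have hne : ∀ v ∈ R, v ≠ l := fun v hv h => hl (h ▸ hv)
  have hparR : ∀ v, v ≠ l → v ∉ R → par v ∈ R := fun v hv hvR =>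
    (hcov _ _ (hpar v hv)).resolve_left hvR
  have hparl : ∀ v, v ≠ l → par v ∉ R → par v = l := by
    intro v hv hp
    by_contra hc
    have h1 := hpar _ hc
    have h2 := huniq (par v) v (par (par v)) hp (hpar v hv).symm h1
    have := hinj v (par v) hv hc (by rw [← h2]; exact Sym2.eq_swap)
    exact (hpar v hv).ne this
  -- total number of vertices of T
  have hV : Fintype.card V = (s - 1) * R.card + 2 := by
    have h1 := T.sum_degrees_eq_twice_card_edges
    have h2 := hT.card_edgeFinset
    have h3 : ∑ v, T.degree v = s * R.card + (Fintype.card V - R.card) := by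
      rw [← Finset.sum_add_sum_compl R, Finset.sum_congr rfl hdR,
        Finset.sum_congr rfl (fun v hv => hdL v (by simpa using hv)), Finset.sum_const,
        Finset.sum_const, Finset.card_compl]
      simp [mul_comm]
    have h4 := Finset.card_le_univ R
    obtain ⟨t, rfl⟩ : ∃ t, s = t + 1 := ⟨s - 1, by omega⟩
    simp only [Nat.add_sub_cancel, Nat.add_mul, one_mul] at *
    omega
  -- one vertex of R with parent l
  have hone : (R.filter (fun v => par v ∉ R)).card = 1 := by
    rw [Finset.card_eq_one]
    obtain ⟨u, hu, hu'⟩ := SimpleGraph.degree_eq_one_iff_existsUnique_adj.1 (hdL l hl)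
    have huR : u ∈ R := (hcov _ _ hu).resolve_left hl
    refine ⟨u, ?_⟩
    ext v
    simp only [Finset.mem_filter, Finset.mem_singleton]
    constructor
    · rintro ⟨hv, hv'⟩
      have := hpar v (hne v hv)
      rw [hparl v (hne v hv) hv'] at this
      exact hu' v this.symm
    · rintro rfl
      refine ⟨huR, ?_⟩
      obtain ⟨w, hw, e⟩ := hsurj l v hu
      rw [Sym2.eq_iff] at e
      rcases e with e | e
      · exact absurd e.1 hw
      · rw [e.1] at e; rw [e.2]; exact hl
  have hV' : Fintype.card V' = R.card * ((s - 1) * k + 1) + k := by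
    let A : V → Finset V' := fun v =>
      if h : v ≠ l then (P (hpar v h)).support.toFinset.erase (ι (par v)) else ∅
    have hA : ∀ v (h : v ≠ l), A v = (P (hpar v h)).support.toFinset.erase (ι (par v)) :=
      fun v h => by simp only [A]; rw [dif_pos h]
    have hAc : ∀ v, v ≠ l → (A v).card = f s(v, par v) + 1 := by
      intro v h
      rw [hA v h, Finset.card_erase_of_mem (by simp),
        List.toFinset_card_of_nodup (hP _).support_nodup]
      simp [hlen]
    have hAι : ∀ v (h : v ≠ l) z, ι z ∈ A v → z = v := by
      intro v h z hz
      rw [hA v h] at hz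
      simp only [Finset.mem_erase, List.mem_toFinset] at hz
      rcases hran _ _ hz.2 ⟨z, rfl⟩ with h1 | h1
      · exact hι h1
      · exact absurd h1 hz.1
    have hun : (Finset.univ.erase l).biUnion A = Finset.univ.erase (ι l) := by
      ext x
      simp only [Finset.mem_biUnion, Finset.mem_erase, Finset.mem_univ, and_true]
      constructor
      · rintro ⟨v, hv, hx⟩ rfl
        exact hv (hAι v hv l hx).symm
      · intro hx
        by_cases hxr : x ∈ Set.range ι
        · obtain ⟨v, rfl⟩ := hxr
          have hv : v ≠ l := fun h => hx (by rw [h])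
          refine ⟨v, hv, ?_⟩
          rw [hA v hv]
          simp only [Finset.mem_erase, List.mem_toFinset]
          exact ⟨fun h => (hpar v hv).ne (hι h), by simp⟩
        · obtain h | ⟨u, v, h, hx'⟩ := hcover x
          · exact absurd h hxr
          obtain ⟨w, hw, e⟩ := hsurj u v h
          refine ⟨w, hw, ?_⟩
          rw [hA w hw]
          simp only [Finset.mem_erase, List.mem_toFinset]
          exact ⟨fun h => hxr ⟨_, h.symm⟩, hsame _ _ e.symm x hx'⟩
    have hcard := congrArg Finset.card hun
    rw [Finset.card_biUnion, Finset.card_erase_of_mem (Finset.mem_univ _), Finset.card_univ] at hcard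
    · have e1 : ∑ v ∈ Finset.univ.erase l, (A v).card =
          ∑ v ∈ Finset.univ.erase l, (k + if v ∈ R ∧ par v ∈ R then 1 else 0) := by
        apply Finset.sum_congr rfl
        intro v hv
        have hv : v ≠ l := by simpa using hv
        rw [hAc v hv]
        have ha := hpar v hv
        split_ifs with h
        · rw [hf1 _ _ ha h.1 h.2]
        · by_cases h1 : par v ∈ R
          · have h2 : v ∉ R := fun h2 => h ⟨h2, h1⟩
            rw [Sym2.eq_swap, hf2 _ _ ha.symm h2]; omega
          · rw [hf2 _ _ ha h1]; omega
      have e2 : ((Finset.univ.erase l).filter (fun v => v ∈ R ∧ par v ∈ R)).card + 1 = R.card := by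
        rw [← hone, ← Finset.card_filter_add_card_filter_not (s := R) (fun v => par v ∈ R)]
        congr 2
        ext v
        simp only [Finset.mem_filter, Finset.mem_erase, Finset.mem_univ, and_true]
        exact ⟨fun h => h.2, fun h => ⟨hne v h.1, h⟩⟩
      rw [e1, Finset.sum_add_distrib, Finset.sum_const, ← Finset.card_filter,
        Finset.card_erase_of_mem (Finset.mem_univ _), Finset.card_univ, hV] at hcard
      have : 0 < Fintype.card V' := Fintype.card_pos_iff.2 ⟨ι l⟩
      simp only [smul_eq_mul] at hcard
      rw [show (s - 1) * R.card + 2 - 1 = (s-1) * R.card + 1 by omega] at hcard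
      have : Fintype.card V' = ((s - 1) * R.card + 1) * k + R.card := by omega
      rw [this]; ring
    · intro v hv w hw hvw
      have hv : v ≠ l := by simpa using hv
      have hw : w ≠ l := by simpa using hw
      rw [Function.onFun, Finset.disjoint_left]
      intro z hz hz'
      have hzr : z ∈ Set.range ι := by
        have a := hz
        have b := hz'
        rw [hA v hv] at a
        rw [hA w hw] at b
        simp only [Finset.mem_erase, List.mem_toFinset] at a b
        exact hdisj _ _ (fun e => hvw (hinj v w hv hw e)) z a.2 b.2
      obtain ⟨y, rfl⟩ := hzr
      exact hvw ((hAι v hv y hz).symm.trans (hAι w hw y hz'))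
  -- lower bound
  have hlow : ∃ Q : Finset Tk.Subgraph, (∀ H ∈ Q, H.IsKEdgePath k) ∧
      (Q : Set Tk.Subgraph).Pairwise (fun H H' => Disjoint H.verts H'.verts) ∧
      Q.card = R.card := by
    let W : R → Tk.Subgraph := fun v => ((P (hpar v (hne v v.2))).take k).toSubgraph
    have key : ∀ v : R, ι (par v) ∈ (W v).verts → par v ∉ R := by
      intro v hv hR
      simp only [W, SimpleGraph.Walk.mem_verts_toSubgraph] at hv
      refine aux_supp_mem _ k (hP _) ?_ hv rfl
      rw [hlen, hf1 _ _ (hpar v (hne v v.2)) v.2 hR]; omega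
    have hWsub : ∀ v : R, ∀ z ∈ (W v).verts, z ∈ (P (hpar v (hne v v.2))).support := by
      intro v z hz
      simp only [W, SimpleGraph.Walk.mem_verts_toSubgraph] at hz
      exact (SimpleGraph.Walk.isSubwalk_take _ k).support_subset hz
    have hWd : ∀ v w : R, v ≠ w → Disjoint (W v).verts (W w).verts := by
      intro v w hvw
      rw [Set.disjoint_left]
      intro z hz hz'
      have hvw' : (v : V) ≠ w := fun h => hvw (Subtype.ext h)
      obtain ⟨y, rfl⟩ := hdisj _ _ (fun e => hvw' (hinj v w (hne v v.2) (hne w w.2) e)) z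
        (hWsub v z hz) (hWsub w z hz')
      have a := hran _ _ (hWsub v _ hz) ⟨y, rfl⟩
      have b := hran _ _ (hWsub w _ hz') ⟨y, rfl⟩
      rcases a with a | a <;> rcases b with b | b
      · exact hvw' (hι (a.symm.trans b))
      · have c : (v : V) = par w := hι (a.symm.trans b)
        rw [b] at hz'
        exact key w hz' (c ▸ v.2)
      · have c : (w : V) = par v := hι (b.symm.trans a)
        rw [a] at hz
        exact key v hz (c ▸ w.2)
      · have c : par v = par w := hι (a.symm.trans b)
        rw [a] at hz
        refine hvw' (huniq (par v) v w (key v hz) (hpar v (hne v v.2)).symm ?_)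
        rw [c]
        exact (hpar w (hne w w.2)).symm
    have hWne : ∀ v, (W v).verts.Nonempty := fun v =>
      ⟨ι v, by simp only [W, SimpleGraph.Walk.mem_verts_toSubgraph]; simp⟩
    refine ⟨Finset.univ.image W, ?_, ?_, ?_⟩
    · intro H hH
      simp only [Finset.mem_image, Finset.mem_univ, true_and] at hH
      obtain ⟨v, rfl⟩ := hH
      refine ⟨_, _, _, (hP (hpar v (hne v v.2))).take k, ?_, rfl⟩
      rw [SimpleGraph.Walk.take_length, hlen]
      by_cases h : par v ∈ R
      · rw [hf1 _ _ (hpar v (hne v v.2)) v.2 h]; omega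
      · rw [hf2 _ _ (hpar v (hne v v.2)) h]; omega
    · intro H hH H' hH' hHH
      simp only [Finset.coe_image, Finset.coe_univ, Set.image_univ, Set.mem_range] at hH hH'
      obtain ⟨v, rfl⟩ := hH
      obtain ⟨w, rfl⟩ := hH'
      exact hWd v w (fun h => hHH (by rw [h]))
    · rw [Finset.card_image_of_injective, Finset.card_univ, Fintype.card_coe]
      intro v w h
      by_contra hc
      have := hWd v w hc
      rw [h, disjoint_self] at this
      exact (hWne w).ne_empty this
  -- upper bound
  have hmeet : ∀ H : Tk.Subgraph, H.IsKEdgeTree k → ∃ v ∈ R, ι v ∈ H.verts := by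
    intro H hH
    by_contra hc
    push Not at hc
    have hcd := aux_tree_card hH
    obtain ⟨hHt, hHe⟩ := hH
    have hne0 : H.edgeSet.Nonempty := by
      rw [Set.nonempty_iff_ne_empty]; intro h; rw [h] at hHe; simp at hHe; omega
    obtain ⟨e, he⟩ := hne0
    obtain ⟨u, v, h, heP⟩ := (hedge e).1 (H.edgeSet_subset he)
    induction e with | _ x y
    have hx : x ∈ (P h).support := SimpleGraph.Walk.fst_mem_support_of_mem_edges _ heP
    have hxH : x ∈ H.verts := H.edge_vert he
    have step : ∀ a b : V', H.Adj a b → a ∈ (P h).support → b ∈ (P h).support := by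
      intro a b hab ha
      obtain ⟨u', v', h', heP'⟩ := (hedge s(a, b)).1 hab.adj_sub
      have ha' := SimpleGraph.Walk.fst_mem_support_of_mem_edges _ heP'
      have hb' := SimpleGraph.Walk.snd_mem_support_of_mem_edges _ heP'
      by_cases es : s(u, v) = s(u', v')
      · exact hsame h' h es.symm b hb'
      obtain ⟨z, rfl⟩ := hdisj h h' es a ha ha'
      have hzR : z ∉ R := fun hz => hc z hz (H.edge_vert hab)
      exfalso
      apply es
      have c1 := hran h _ ha ⟨z, rfl⟩
      have c2 := hran h' _ ha' ⟨z, rfl⟩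
      rcases c1 with c1 | c1 <;> rcases c2 with c2 | c2 <;> have d1 := hι c1 <;> have d2 := hι c2
      · subst d1; subst d2; rw [huniq _ _ _ hzR h h']
      · subst d1; subst d2; rw [huniq _ _ _ hzR h h'.symm]; exact Sym2.eq_swap
      · subst d1; subst d2; rw [huniq _ _ _ hzR h.symm h']; exact Sym2.eq_swap
      · subst d1; subst d2; rw [huniq _ _ _ hzR h.symm h'.symm]
    have hall : ∀ z : H.verts, (z : V') ∈ (P h).support := by
      intro z
      obtain ⟨w⟩ := hHt.connected ⟨x, hxH⟩ z
      have gen : ∀ (p q : H.verts) (w : H.coe.Walk p q), (p : V') ∈ (P h).support →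
          (q : V') ∈ (P h).support := by
        intro p q w
        induction w with
        | nil => exact id
        | cons hab _ ih => exact fun hp => ih (step _ _ hab hp)
      exact gen _ _ w hx
    have hcS : (P h).support.toFinset.card = f s(u, v) + 2 := by
      rw [List.toFinset_card_of_nodup (hP _).support_nodup]; simp [hlen]
    have bound : ∀ S : Finset V', (∀ z ∈ H.verts, z ∈ S) → k + 1 ≤ S.card := by
      intro S hS
      rw [← hcd, ← Set.ncard_coe_finset]
      exact Set.ncard_le_ncard (fun z hz => hS z hz)
    have huv : ι u ≠ ι v := fun e => h.ne (hι e)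
    by_cases hu : u ∈ R <;> by_cases hv : v ∈ R
    · have := bound (((P h).support.toFinset.erase (ι u)).erase (ι v)) (by
        intro z hz
        simp only [Finset.mem_erase, List.mem_toFinset]
        exact ⟨fun e => hc v hv (e ▸ hz), fun e => hc u hu (e ▸ hz), hall ⟨z, hz⟩⟩)
      rw [Finset.card_erase_of_mem (by simp [huv.symm]), Finset.card_erase_of_mem (by simp), hcS,
        hf1 _ _ h hu hv] at this
      omega
    · have := bound ((P h).support.toFinset.erase (ι u)) (by
        intro z hz
        simp only [Finset.mem_erase, List.mem_toFinset]
        exact ⟨fun e => hc u hu (e ▸ hz), hall ⟨z, hz⟩⟩)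
      rw [Finset.card_erase_of_mem (by simp), hcS, hf2 _ _ h hv] at this
      omega
    · have := bound ((P h).support.toFinset.erase (ι v)) (by
        intro z hz
        simp only [Finset.mem_erase, List.mem_toFinset]
        exact ⟨fun e => hc v hv (e ▸ hz), hall ⟨z, hz⟩⟩)
      rw [Finset.card_erase_of_mem (by simp), hcS, Sym2.eq_swap, hf2 _ _ h.symm hu] at this
      omega
    · exact (hcov _ _ h).elim hu hv
  have hup : ∀ Q : Finset Tk.Subgraph, (∀ H ∈ Q, H.IsKEdgeTree k) →
      (Q : Set Tk.Subgraph).Pairwise (fun H H' => Disjoint H.verts H'.verts) →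
      Q.card ≤ R.card := by
    intro Q hQ hQd
    have : Nonempty V := ⟨l⟩
    choose! g hg using hmeet
    apply Finset.card_le_card_of_injOn g
    · intro H hH
      exact (hg H (hQ H hH)).1
    · intro H hH H' hH' e
      by_contra hc
      have : Disjoint H.verts H'.verts := hQd hH hH' hc
      rw [Set.disjoint_left] at this
      exact this (hg H (hQ H hH)).2 (e ▸ (hg H' (hQ H' hH')).2)
  obtain ⟨Q, hQ1, hQ2, hQ3⟩ := hlow
  refine ⟨IsGreatest.csSup_eq ⟨⟨Q, hQ1, hQ2, hQ3⟩, ?_⟩, IsGreatest.csSup_eq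
    ⟨⟨Q, fun H hH => aux_path_tree (hQ1 H hH), hQ2, hQ3⟩, ?_⟩, hV'⟩
  · rintro n ⟨Q', h1, h2, rfl⟩
    exact hup Q' (fun H hH => aux_path_tree (h1 H hH)) h2
  · rintro n ⟨Q', h1, h2, rfl⟩
    exact hup Q' h1 h2

/-- Let `k ≥ 1` and `s ≥ 1` and let `T` be a finite tree in which every non-leaf
vertex has degree exactly `s` (with `v(T) = 2` if `s = 1`, and at least one
non-leaf vertex if `s ≥ 2`).  Let `T_k` be obtained from `T` by subdividing every
non-dangling edge with exactly `k` new vertices and every dangling edge (an edge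
incident to a leaf) with exactly `k − 1` new vertices.  Then
`λ_k(T_k) = τ_k(T_k) = (v(T_k) − k)/(sk − k + 1)`. -/
theorem stmt_4 {V V' : Type} [Fintype V] [Fintype V'] (k s : ℕ) (hk : 1 ≤ k) (hs : 1 ≤ s)
    (T : SimpleGraph V) [DecidableRel T.Adj] (hT : T.IsTree)
    (hdeg : ∀ v : V, T.degree v ≠ 1 → T.degree v = s)
    (hs1 : s = 1 → Fintype.card V = 2)
    (hs2 : 2 ≤ s → ∃ v : V, T.degree v ≠ 1)
    (Tk : SimpleGraph V') (ι : V → V') (f : Sym2 V → ℕ)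
    (hf : ∀ u v : V, T.Adj u v →
      ((T.degree u = 1 ∨ T.degree v = 1) → f s(u, v) = k - 1) ∧
      (¬(T.degree u = 1 ∨ T.degree v = 1) → f s(u, v) = k))
    (hsub : T.IsSubdivision Tk ι f) :
    (Tk.lambdaK k : ℚ) = (Tk.tauK k : ℚ) ∧
    (Tk.tauK k : ℚ) = ((Fintype.card V' : ℚ) - k) / (s * k - k + 1) := by
  classical
  have fin : ∀ (R : Finset V) (l : V), l ∉ R → (∀ v ∈ R, T.degree v = s) →
      (∀ v, v ∉ R → T.degree v = 1) → (∀ u v, T.Adj u v → u ∈ R ∨ v ∈ R) →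
      (∀ u v : V, T.Adj u v → u ∈ R → v ∈ R → f s(u, v) = k) →
      (∀ u v : V, T.Adj u v → v ∉ R → f s(u, v) = k - 1) →
      (Tk.lambdaK k : ℚ) = (Tk.tauK k : ℚ) ∧
      (Tk.tauK k : ℚ) = ((Fintype.card V' : ℚ) - k) / (s * k - k + 1) := by
    intro R l h1 h2 h3 h4 h5 h6
    obtain ⟨a, b, c⟩ := aux_core k s hk hs T hT R l h1 h2 h3 h4 Tk ι f h5 h6 hsub
    rw [a, b, c]
    refine ⟨rfl, ?_⟩
    obtain ⟨t, rfl⟩ : ∃ t, s = t + 1 := ⟨s - 1, by omega⟩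
    have : ((t + 1 : ℕ) : ℚ) * k - k + 1 ≠ 0 := by
      push_cast
      have : (0 : ℚ) ≤ t * k := by positivity
      intro h; linarith
    rw [eq_div_iff this, Nat.add_sub_cancel]
    push_cast
    ring
  rcases Nat.lt_or_ge s 2 with h | h
  · have hs' : s = 1 := by omega
    subst hs'
    have hV := hs1 rfl
    have hd : ∀ v, T.degree v = 1 := fun v => by
      by_contra hc; exact hc (hdeg v hc)
    obtain ⟨a, b, hab, hu⟩ := Finset.card_eq_two.1 (Finset.card_univ (α := V) ▸ hV)
    have hm : ∀ x, x = a ∨ x = b := fun x => by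
      have := Finset.mem_univ x; rw [hu] at this; simpa using this
    refine fin {a} b (by simpa using hab.symm) (fun v _ => hd v) (fun v _ => hd v) ?_ ?_ ?_
    · intro u v huv
      simp only [Finset.mem_singleton]
      by_contra hc
      push Not at hc
      exact huv.ne (((hm u).resolve_left hc.1).trans ((hm v).resolve_left hc.2).symm)
    · intro u v huv hu hv
      simp only [Finset.mem_singleton] at hu hv
      exact absurd (hu.trans hv.symm) huv.ne
    · intro u v huv _
      exact (hf u v huv).1 (Or.inl (hd u))
  · obtain ⟨c, hc⟩ := hs2 h
    have hcs := hdeg c hc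
    have hnt : Nontrivial V := by
      have : 0 < T.degree c := by omega
      obtain ⟨d, hd⟩ := (T.degree_pos_iff_exists_adj c).1 this
      exact ⟨c, d, hd.ne⟩
    obtain ⟨l, hl⟩ := hT.exists_vert_degree_one_of_nontrivial
    refine fin (Finset.univ.filter (fun v => T.degree v ≠ 1)) l (by simpa using hl) ?_ ?_ ?_ ?_ ?_
    · intro v hv; exact hdeg v (by simpa using hv)
    · intro v hv; simpa using hv
    · intro u v huv
      by_contra hcon
      simp only [Finset.mem_filter, Finset.mem_univ, true_and] at hcon
      push Not at hcon
      have hclosed : ∀ (p q : V) (w : T.Walk p q), (p = u ∨ p = v) → (q = u ∨ q = v) := by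
        intro p q w
        induction w with
        | nil => exact id
        | cons hab _ ih =>
          intro hp
          apply ih
          rcases hp with rfl | rfl
          · right
            exact (SimpleGraph.degree_eq_one_iff_existsUnique_adj.1 hcon.1).unique hab huv
          · left
            exact (SimpleGraph.degree_eq_one_iff_existsUnique_adj.1 hcon.2).unique hab huv.symm
      obtain ⟨w⟩ := hT.connected u c
      rcases hclosed _ _ w (Or.inl rfl) with rfl | rfl
      · exact hc hcon.1
      · exact hc hcon.2
    · intro u v huv hu hv
      simp only [Finset.mem_filter, Finset.mem_univ, true_and] at hu hv
      exact (hf u v huv).2 (by tauto)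
    · intro u v huv hv
      simp only [Finset.mem_filter, Finset.mem_univ, true_and, not_not] at hv
      exact (hf u v huv).1 (Or.inr hv)
end

section
/- Let s ≥ 3 be an integer and let H be a finite simple graph in which every vertex has degree at least 3 and at most s. Let H_2 be the graph obtained from H by subdividing every edge with exactly 2 new vertices. Then λ(H_2) = v(H) ≥ v(H_2)/(s+1), and λ(H_2) = v(H_2)/(s+1) holds if and only if H is s-regular. -/
open SimpleGraph in
theorem walk3 {V : Type*} {G : SimpleGraph V} {a b : V} (p : G.Walk a b) (hl : p.length = 3) :
    p.support = [a, p.getVert 1, p.getVert 2, b] ∧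
    p.edges = [s(a, p.getVert 1), s(p.getVert 1, p.getVert 2), s(p.getVert 2, b)] := by
  match p, hl with
  | .cons h1 (.cons h2 (.cons h3 .nil)), _ => simp

open SimpleGraph in
/-- combinatorial description of the 2-subdivision -/
theorem sub_struct {V V' : Type} (H : SimpleGraph V) (H2 : SimpleGraph V') (ι : V → V')
    (hsub : H.IsSubdivision H2 ι (fun _ => 2)) :
    Function.Injective ι ∧ ∃ x : H.Dart → V', Function.Injective x ∧
      (∀ d v, x d ≠ ι v) ∧ (∀ z, (∃ v, z = ι v) ∨ ∃ d, z = x d) ∧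
      (∀ d, H2.Adj (ι d.fst) (x d)) ∧
      (∀ d d', H2.Adj (x d) (x d') → d' = d.symm) := by
  obtain ⟨hι, P, hpath, hlen, hsymm, hbr, hcov, hdisj, hedge⟩ := hsub
  refine ⟨hι, fun d => (P d.adj).getVert 1, ?_⟩
  have hsup := fun {u v} (h : H.Adj u v) => (walk3 (P h) (hlen h)).1
  have hed := fun {u v} (h : H.Adj u v) => (walk3 (P h) (hlen h)).2
  have hg2 : ∀ {u v} (h : H.Adj u v), (P h.symm).getVert 1 = (P h).getVert 2 := by
    intro u v h
    rw [hsymm h, Walk.getVert_reverse, hlen h]; rfl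
  have hnd : ∀ {u v} (h : H.Adj u v), [ι u, (P h).getVert 1, (P h).getVert 2, ι v].Nodup := by
    intro u v h
    rw [← hsup h]; exact (hpath h).support_nodup
  have hnr : ∀ {u v} (h : H.Adj u v) w, (P h).getVert 1 ≠ ι w := by
    intro u v h w e
    have := hbr h _ (by rw [hsup h]; simp) ⟨w, e.symm⟩
    have h2 := hnd h
    simp at h2
    grind
  have hinj : Function.Injective (fun d : H.Dart => (P d.adj).getVert 1) := by
    rintro ⟨⟨u, v⟩, h⟩ ⟨⟨u', v'⟩, h'⟩ e
    dsimp at e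
    have hs : s(u, v) = s(u', v') := by
      by_contra hne
      obtain ⟨w, hw⟩ := hdisj h h' hne ((P h).getVert 1) (by rw [hsup h]; simp)
        (by rw [hsup h', e]; simp)
      exact hnr h w hw.symm
    rw [Sym2.eq_iff] at hs
    rcases hs with ⟨rfl, rfl⟩ | ⟨rfl, rfl⟩
    · rfl
    · exfalso
      have h1 := hg2 h
      have h2 := hnd h
      simp at h2
      exact h2.2.1.1 (e.trans h1)
  refine ⟨hinj, fun d v => hnr d.adj v, ?_, ?_, ?_⟩
  · intro z
    rcases hcov z with ⟨v, rfl⟩ | ⟨u, v, h, hz⟩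
    · exact Or.inl ⟨v, rfl⟩
    · rw [hsup h] at hz
      simp only [List.mem_cons, List.not_mem_nil, or_false] at hz
      rcases hz with rfl | rfl | rfl | rfl
      · exact Or.inl ⟨_, rfl⟩
      · exact Or.inr ⟨⟨(u, v), h⟩, rfl⟩
      · exact Or.inr ⟨⟨(v, u), h.symm⟩, (hg2 h).symm⟩
      · exact Or.inl ⟨_, rfl⟩
  · intro d
    rw [← SimpleGraph.mem_edgeSet, hedge]
    exact ⟨_, _, d.adj, by rw [hed d.adj]; simp⟩
  · intro d d' hadj
    rw [← SimpleGraph.mem_edgeSet, hedge] at hadj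
    obtain ⟨u, v, h, hm⟩ := hadj
    rw [hed h] at hm
    simp only [List.mem_cons, List.not_mem_nil, or_false, Sym2.eq_iff] at hm
    have n1 := fun w => hnr d.adj w
    have n2 := fun w => hnr d'.adj w
    have key : ∀ a b : H.Dart, (P a.adj).getVert 1 = (P h).getVert 1 →
        (P b.adj).getVert 1 = (P h).getVert 2 → b = a.symm := by
      intro a b ha hb
      have e1 : a = ⟨(u, v), h⟩ := hinj ha
      have e2 : b = ⟨(v, u), h.symm⟩ := hinj (hb.trans (hg2 h).symm)
      rw [e1, e2]; rfl
    rcases hm with (⟨a, -⟩ | ⟨-, a⟩) | (⟨a, b⟩ | ⟨a, b⟩) | (⟨-, a⟩ | ⟨a, -⟩)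
    · exact absurd a (n1 _)
    · exact absurd a (n2 _)
    · exact key _ _ a b
    · rw [key _ _ b a]; simp
    · exact absurd a (n2 _)
    · exact absurd a (n1 _)

open SimpleGraph in
theorem lambda_eq {V V' : Type} [Fintype V] [Fintype V']
    (H : SimpleGraph V) [DecidableRel H.Adj]
    (hdeg : ∀ v : V, 3 ≤ H.degree v)
    (H2 : SimpleGraph V') (ι : V → V') (hι : Function.Injective ι) (x : H.Dart → V')
    (hx : Function.Injective x) (hne : ∀ d v, x d ≠ ι v)
    (hcov : ∀ z, (∃ v, z = ι v) ∨ ∃ d, z = x d)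
    (hadj : ∀ d, H2.Adj (ι d.fst) (x d))
    (hadj2 : ∀ d d', H2.Adj (x d) (x d') → d' = d.symm) :
    H2.lambdaK 2 = Fintype.card V := by
  classical
  apply IsGreatest.csSup_eq
  constructor
  · have hc : ∀ v, ∃ Q : H2.Subgraph, Q.IsKEdgePath 2 ∧ ι v ∈ Q.verts ∧
        ∀ z ∈ Q.verts, z = ι v ∨ ∃ d : H.Dart, d.fst = v ∧ z = x d := by
      intro v
      have h1 : 1 < (H.neighborFinset v).card := by
        rw [H.card_neighborFinset_eq_degree]; have := hdeg v; omega
      obtain ⟨a, ha, b, hb, hab⟩ := Finset.one_lt_card.1 h1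
      rw [mem_neighborFinset] at ha hb
      let d1 : H.Dart := ⟨(v, a), ha⟩
      let d2 : H.Dart := ⟨(v, b), hb⟩
      have A1 : H2.Adj (x d1) (ι v) := (hadj d1).symm
      have A2 : H2.Adj (ι v) (x d2) := hadj d2
      have hd : x d1 ≠ x d2 := by
        intro e
        have := hx e
        simp only [d1, d2, Dart.mk.injEq, Prod.mk.injEq] at this
        exact hab this.2
      refine ⟨(Walk.cons A1 (Walk.cons A2 Walk.nil)).toSubgraph,
        ⟨_, _, _, ?_, rfl, rfl⟩, ?_, ?_⟩
      · simp [Walk.isPath_def, hne, hd, (hne _ _).symm]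
      · rw [Walk.mem_verts_toSubgraph]; simp
      · intro z hz
        rw [Walk.mem_verts_toSubgraph] at hz
        simp only [Walk.support_cons, Walk.support_nil, List.mem_cons, List.not_mem_nil,
          or_false] at hz
        rcases hz with rfl | rfl | rfl
        · exact Or.inr ⟨d1, rfl, rfl⟩
        · exact Or.inl rfl
        · exact Or.inr ⟨d2, rfl, rfl⟩
    choose Q hQ1 hQ2 hQ3 using hc
    have hdis : ∀ u v, u ≠ v → Disjoint (Q u).verts (Q v).verts := by
      intro u v huv
      rw [Set.disjoint_left]
      intro z hz hz'
      rcases hQ3 u z hz with h | ⟨d, hd, h⟩ <;> rcases hQ3 v z hz' with h' | ⟨d', hd', h'⟩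
      · exact huv (hι (h.symm.trans h'))
      · exact hne _ _ (h'.symm.trans h)
      · exact hne _ _ (h.symm.trans h')
      · have := hx (h.symm.trans h')
        subst this
        exact huv (hd.symm.trans hd')
    have hQi : Function.Injective Q := by
      intro u v e
      by_contra huv
      have := hdis u v huv
      rw [e] at this
      exact Set.disjoint_left.1 this (hQ2 v) (hQ2 v)
    refine ⟨Finset.univ.image Q, ?_, ?_, ?_⟩
    · intro K hK
      obtain ⟨v, -, rfl⟩ := Finset.mem_image.1 hK
      exact hQ1 v
    · intro K hK K' hK' hKK
      obtain ⟨v, -, rfl⟩ := Finset.mem_image.1 hK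
      obtain ⟨v', -, rfl⟩ := Finset.mem_image.1 hK'
      exact hdis _ _ (fun e => hKK (by rw [e]))
    · rw [Finset.card_image_of_injective _ hQi, Finset.card_univ]
  · rintro n ⟨P, hP, hd, rfl⟩
    have hb : ∀ K ∈ P, ∃ v, ι v ∈ K.verts := by
      intro K hK
      obtain ⟨a, b, w, hw, hl, rfl⟩ := hP K hK
      match w, hl, hw with
      | .cons (v := m) h1 (.cons h2 .nil), _, hw =>
        simp only [Walk.mem_verts_toSubgraph]
        rcases hcov a with ⟨v, rfl⟩ | ⟨d1, rfl⟩
        · exact ⟨v, by simp⟩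
        rcases hcov m with ⟨v, rfl⟩ | ⟨d2, rfl⟩
        · exact ⟨v, by simp⟩
        rcases hcov b with ⟨v, rfl⟩ | ⟨d3, rfl⟩
        · exact ⟨v, by simp⟩
        exfalso
        have e1 := hadj2 _ _ h1.symm
        have e3 := hadj2 _ _ h2
        simp [Walk.isPath_def, e1, e3] at hw
    rcases P.eq_empty_or_nonempty with rfl | ⟨K0, hK0⟩
    · simp
    haveI : Nonempty V := ⟨(hb K0 hK0).choose⟩
    choose! f hf using hb
    rw [← Finset.card_univ]
    refine Finset.card_le_card_of_injOn f (fun _ _ => Finset.mem_univ _) ?_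
    intro K hK K' hK' e
    by_contra hKK
    have := hd hK hK' hKK
    exact Set.disjoint_left.1 this (hf K hK) (e ▸ hf K' hK')

/-- Let `s ≥ 3` and let `H` be a finite simple graph in which every vertex has
degree at least 3 and at most `s`.  Let `H₂` be obtained from `H` by subdividing
every edge with exactly 2 new vertices.  Then `λ(H₂) = v(H) ≥ v(H₂)/(s+1)`, with
`λ(H₂) = v(H₂)/(s+1)` if and only if `H` is `s`-regular. -/
theorem stmt_6 {V V' : Type} [Fintype V] [Fintype V'] (s : ℕ) (hs : 3 ≤ s)
    (H : SimpleGraph V) [DecidableRel H.Adj]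
    (hdeg : ∀ v : V, 3 ≤ H.degree v ∧ H.degree v ≤ s)
    (H2 : SimpleGraph V') (ι : V → V')
    (hsub : H.IsSubdivision H2 ι (fun _ => 2)) :
    H2.lambdaK 2 = Fintype.card V ∧
    (Fintype.card V : ℚ) ≥ (Fintype.card V' : ℚ) / (s + 1) ∧
    ((H2.lambdaK 2 : ℚ) = (Fintype.card V' : ℚ) / (s + 1) ↔ H.IsRegularOfDegree s) := by
  classical
  obtain ⟨hι, x, hx, hne, hcov, hadj, hadj2⟩ := sub_struct H H2 ι hsub
  have hl := lambda_eq H (fun v => (hdeg v).1) H2 ι hι x hx hne hcov hadj hadj2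
  have hcard : Fintype.card V' = Fintype.card V + ∑ v, H.degree v := by
    rw [← H.dart_card_eq_sum_degrees, ← Fintype.card_sum]
    refine (Fintype.card_of_bijective (f := Sum.elim ι x) ⟨?_, ?_⟩).symm
    · exact hι.sumElim hx (fun v d => (hne d v).symm)
    · intro z
      rcases hcov z with ⟨v, rfl⟩ | ⟨d, rfl⟩
      · exact ⟨Sum.inl v, rfl⟩
      · exact ⟨Sum.inr d, rfl⟩
  have hsum : ∑ _v : V, s = Fintype.card V * s := by simp
  have hle : ∑ v, H.degree v ≤ ∑ _v : V, s := Finset.sum_le_sum fun v _ => (hdeg v).2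
  have hpos : (0 : ℚ) < s + 1 := by positivity
  refine ⟨hl, ?_, ?_⟩
  · rw [ge_iff_le, div_le_iff₀ hpos]
    rw [hsum] at hle
    have : Fintype.card V' ≤ Fintype.card V * (s + 1) := by rw [hcard, mul_add]; omega
    exact_mod_cast this
  · rw [hl, eq_div_iff hpos.ne']
    have e1 : ((Fintype.card V : ℚ) * (s + 1) = Fintype.card V') ↔
        ∑ v, H.degree v = ∑ _v : V, s := by
      rw [hsum]
      have : ((Fintype.card V : ℚ) * (s + 1) = Fintype.card V') ↔
        Fintype.card V * (s + 1) = Fintype.card V' := by exact_mod_cast Iff.rfl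
      rw [this, hcard, mul_add]; omega
    rw [e1, Finset.sum_eq_sum_iff_of_le fun v _ => (hdeg v).2]
    exact ⟨fun h v => h v (Finset.mem_univ v), fun h v _ => h v⟩
end

section
/- Let s ≥ 4 be an integer, let G be a finite simple graph, let T be a thread of G with end-vertices x and y (possibly x = y), and suppose T has at least 4 edges. Let T' = T − {x,y} and G' = G − V(T'). If λ(G') ≥ v(G')/(s+1), then λ(G) ≥ v(G)/(s+1). -/
/-- A path-thread of `G`: a maximal path in `G` such that every vertex having degree
two in the path also has degree two in `G`. -/
def SimpleGraph.IsPathThread {V : Type*} (G : SimpleGraph V) {x y : V}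
    (w : G.Walk x y) : Prop :=
  w.IsPath ∧
  (∀ v : V, (w.toSubgraph.neighborSet v).ncard = 2 → (G.neighborSet v).ncard = 2) ∧
  ∀ (x' y' : V) (w' : G.Walk x' y'), w'.IsPath →
    (∀ v : V, (w'.toSubgraph.neighborSet v).ncard = 2 → (G.neighborSet v).ncard = 2) →
    w.toSubgraph ≤ w'.toSubgraph → w.toSubgraph = w'.toSubgraph

/-- A thread of `G` with end-vertices `x` and `y` (possibly `x = y`): either a
path-thread, or (when `y = x`) a cycle-thread, i.e. a cycle all of whose vertices
except the distinguished vertex `x` have degree two in `G`. -/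
def SimpleGraph.IsThread {V : Type*} (G : SimpleGraph V) {x y : V}
    (w : G.Walk x y) : Prop :=
  G.IsPathThread w ∨
  ∃ h : y = x, (w.copy rfl h).IsCycle ∧
    ∀ v ∈ w.support, v ≠ x → (G.neighborSet v).ncard = 2

open SimpleGraph in
theorem aux_bdd {V : Type} [Fintype V] (G : SimpleGraph V) (k : ℕ) :
    BddAbove {n | ∃ P : Finset G.Subgraph,
    (∀ H ∈ P, H.IsKEdgePath k) ∧
    (P : Set G.Subgraph).Pairwise (fun H H' => Disjoint H.verts H'.verts) ∧
    P.card = n} := by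
  classical
  have := Fintype.ofFinite G.Subgraph
  refine ⟨Fintype.card G.Subgraph, ?_⟩
  rintro n ⟨P, -, -, rfl⟩
  exact Finset.card_le_univ P

open SimpleGraph in
theorem aux_nonempty {V : Type} {G : SimpleGraph V} {k : ℕ} (H : G.Subgraph)
    (h : H.IsKEdgePath k) : H.verts.Nonempty := by
  obtain ⟨u, v, w, -, -, rfl⟩ := h
  exact ⟨u, by simp⟩

open SimpleGraph in
theorem aux_path {V : Type} {G : SimpleGraph V} {a b c : V} (h1 : G.Adj a b) (h2 : G.Adj b c)
    (hac : a ≠ c) : ∃ H : G.Subgraph, H.IsKEdgePath 2 ∧ H.verts = {a, b, c} := by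
  refine ⟨(Walk.cons h1 (Walk.cons h2 Walk.nil)).toSubgraph,
    ⟨a, c, Walk.cons h1 (Walk.cons h2 Walk.nil), ?_, rfl, rfl⟩, ?_⟩
  · simp [Walk.cons_isPath_iff, h1.ne, h2.ne, hac]
  · ext v
    simp only [Walk.mem_verts_toSubgraph]
    simp

open SimpleGraph in
theorem aux_main {V : Type} [Fintype V] (G : SimpleGraph V) (S : Set V) (n : ℕ) (g : ℕ → V)
    (hg : ∀ i < n, g i ∈ S) (hadj : ∀ i, i + 1 < n → G.Adj (g i) (g (i+1)))
    (hinj : ∀ i < n, ∀ j < n, g i = g j → i = j) :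
    (G.induce Sᶜ).lambdaK 2 + n / 3 ≤ G.lambdaK 2 := by
  classical
  obtain ⟨P, hP, hPd, hPc⟩ := Nat.sSup_mem (s := {n | ∃ P : Finset (G.induce Sᶜ).Subgraph,
    (∀ H ∈ P, H.IsKEdgePath 2) ∧
    (P : Set (G.induce Sᶜ).Subgraph).Pairwise (fun H H' => Disjoint H.verts H'.verts) ∧
    P.card = n}) ⟨0, ∅, by simp⟩ (aux_bdd _ _)
  have hex : ∀ j : ℕ, ∃ H : G.Subgraph, j < n / 3 → H.IsKEdgePath 2 ∧
      H.verts = {g (3*j), g (3*j+1), g (3*j+2)} := by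
    intro j
    by_cases hj : j < n / 3
    · obtain ⟨H, hH⟩ := aux_path (hadj (3*j) (by omega)) (hadj (3*j+1) (by omega)) (by
        intro h
        have := hinj _ (by omega) _ (by omega) h
        omega)
      exact ⟨H, fun _ => hH⟩
    · exact ⟨⊥, fun h => absurd h hj⟩
  choose f hf using hex
  let e : (G.induce Sᶜ) →g G := (Embedding.induce Sᶜ).toHom
  have he : Function.Injective e := Subtype.val_injective
  have hmapinj : Function.Injective (Subgraph.map e) := by
    intro H K h
    have hv : e '' H.verts = e '' K.verts := congrArg Subgraph.verts h
    ext a b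
    · exact Set.ext_iff.1 ((Set.image_injective.2 he) hv) a
    · have h2 : Relation.Map H.Adj e e = Relation.Map K.Adj e e := congrArg Subgraph.Adj h
      have h3 := congrFun (congrFun h2 (e a)) (e b)
      simpa [Relation.Map, he.eq_iff] using h3
  have hdisj : ∀ i < n/3, ∀ j < n/3, i ≠ j → Disjoint (f i).verts (f j).verts := by
    intro i hi j hj hij
    rw [(hf i hi).2, (hf j hj).2, Set.disjoint_left]
    intro a ha hb
    simp only [Set.mem_insert_iff, Set.mem_singleton_iff] at ha hb
    rcases ha with rfl | rfl | rfl <;> rcases hb with h | h | h <;>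
    · have := hinj _ (by omega) _ (by omega) h
      omega
  have hfS : ∀ j < n/3, (f j).verts ⊆ S := by
    intro j hj
    rw [(hf j hj).2]
    intro a ha
    simp only [Set.mem_insert_iff, Set.mem_singleton_iff] at ha
    rcases ha with rfl | rfl | rfl <;> exact hg _ (by omega)
  have hPS : ∀ H : (G.induce Sᶜ).Subgraph, (H.map e).verts ⊆ Sᶜ := by
    rintro H _ ⟨a, -, rfl⟩
    exact a.2
  have hfp : ∀ H ∈ (Finset.range (n/3)).image f, H.IsKEdgePath 2 ∧ H.verts ⊆ S := by
    intro H hH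
    obtain ⟨j, hj, rfl⟩ := Finset.mem_image.1 hH
    rw [Finset.mem_range] at hj
    exact ⟨(hf j hj).1, hfS j hj⟩
  have hPp : ∀ H ∈ P.image (Subgraph.map e), H.IsKEdgePath 2 ∧ H.verts ⊆ Sᶜ := by
    intro H hH
    obtain ⟨K, hK, rfl⟩ := Finset.mem_image.1 hH
    refine ⟨?_, hPS K⟩
    obtain ⟨u, v, w, hw, hl, rfl⟩ := hP K hK
    exact ⟨e u, e v, w.map e, Walk.map_isPath_of_injective he hw, by simpa using hl,
      by simp⟩
  have hx : ∀ H ∈ P.image (Subgraph.map e), ∀ H' ∈ (Finset.range (n/3)).image f,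
      Disjoint H.verts H'.verts := fun H hH H' hH' =>
    (Set.disjoint_compl_left_iff_subset.2 subset_rfl).mono (hPp H hH).2 (hfp H' hH').2
  refine le_csSup (aux_bdd G 2) ⟨P.image (Subgraph.map e) ∪ (Finset.range (n/3)).image f,
    ?_, ?_, ?_⟩
  · intro H hH
    rcases Finset.mem_union.1 hH with h | h
    · exact (hPp H h).1
    · exact (hfp H h).1
  · intro H hH H' hH' hne
    rcases Finset.mem_union.1 hH with h | h <;> rcases Finset.mem_union.1 hH' with h' | h'
    · obtain ⟨K, hK, rfl⟩ := Finset.mem_image.1 h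
      obtain ⟨K', hK', rfl⟩ := Finset.mem_image.1 h'
      have := hPd hK hK' (fun h => hne (by rw [h]))
      exact (Set.disjoint_image_iff he).2 this
    · exact hx _ h _ h'
    · exact (hx _ h' _ h).symm
    · obtain ⟨i, hi, rfl⟩ := Finset.mem_image.1 h
      obtain ⟨j, hj, rfl⟩ := Finset.mem_image.1 h'
      exact hdisj i (Finset.mem_range.1 hi) j (Finset.mem_range.1 hj)
        (fun h => hne (by rw [h]))
  · rw [Finset.card_union_of_disjoint, Finset.card_image_of_injective _ hmapinj, hPc,
      Finset.card_image_of_injOn, Finset.card_range]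
    · rfl
    · intro i hi j hj hij
      by_contra hne
      have hi' : i < n/3 := by simpa using hi
      have hj' : j < n/3 := by simpa using hj
      have hd := hdisj i hi' j hj' hne
      rw [← hij, disjoint_self] at hd
      exact (aux_nonempty _ (hf i hi').1).ne_empty hd
    · rw [Finset.disjoint_left]
      intro H h h'
      have hd := hx H h H h'
      rw [disjoint_self] at hd
      exact (aux_nonempty _ (hPp H h).1).ne_empty hd

theorem stmt_7 {V : Type} [Fintype V] (s : ℕ) (hs : 4 ≤ s)
    (G : SimpleGraph V) {x y : V} (w : G.Walk x y)
    (hw : G.IsThread w) (hlen : 4 ≤ w.length)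
    (S : Set V) (hS : S = {v : V | v ∈ w.support ∧ v ≠ x ∧ v ≠ y})
    (hG' : ((G.induce Sᶜ).lambdaK 2 : ℚ) ≥ (Sᶜ.ncard : ℚ) / (s + 1)) :
    (G.lambdaK 2 : ℚ) ≥ (Fintype.card V : ℚ) / (s + 1) := by
  classical
  have key : (∀ i, 1 ≤ i → i ≤ w.length → ∀ j, 1 ≤ j → j ≤ w.length →
      w.getVert i = w.getVert j → i = j) ∧ ∀ i, 1 ≤ i → i < w.length → w.getVert i ≠ x := by
    rcases hw with h | ⟨rfl, h, -⟩
    · have hp := h.1.getVert_injOn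
      refine ⟨fun i _ hi j _ hj h => hp hi hj h, fun i hi hi' h => ?_⟩
      have := hp (show i ≤ w.length by omega) (show 0 ≤ w.length by omega) (by simpa using h)
      omega
    · simp only [SimpleGraph.Walk.copy_rfl_rfl] at h
      have hp := h.getVert_injOn
      refine ⟨fun i hi' hi j hj' hj h => hp ⟨hi', hi⟩ ⟨hj', hj⟩ h, fun i hi hi' h => ?_⟩
      have := hp (show 1 ≤ i ∧ i ≤ w.length by omega)
        (show 1 ≤ w.length ∧ w.length ≤ w.length by omega) (by simpa using h)
      omega
  obtain ⟨hinj, hx⟩ := key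
  have hmem : ∀ i < w.length - 1, w.getVert (i+1) ∈ S := by
    intro i hi
    rw [hS]
    refine ⟨w.getVert_mem_support _, hx _ (by omega) (by omega), fun h => ?_⟩
    have := hinj (i+1) (by omega) (by omega) w.length (by omega) le_rfl (by simpa using h)
    omega
  have hmain := aux_main G S (w.length - 1) (fun i => w.getVert (i+1)) hmem
    (fun i hi => w.adj_getVert_succ (by omega))
    (fun i hi j hj h => by
      have := hinj (i+1) (by omega) (by omega) (j+1) (by omega) (by omega) h
      omega)
  have hcard : S.ncard ≤ w.length - 1 := by
    have hsub : S ⊆ ((Finset.range (w.length - 1)).image (fun i => w.getVert (i+1)) : Finset V) := by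
      intro v hv
      rw [hS] at hv
      obtain ⟨hv, hvx, hvy⟩ := hv
      obtain ⟨i, rfl, hi⟩ := SimpleGraph.Walk.mem_support_iff_exists_getVert.1 hv
      have h0 : i ≠ 0 := by rintro rfl; simp at hvx
      have h1 : i ≠ w.length := by rintro rfl; simp at hvy
      simp only [Finset.coe_image, Set.mem_image, Finset.coe_range, Set.mem_Iio]
      exact ⟨i - 1, by omega, by congr 1; omega⟩
    calc S.ncard ≤ _ := Set.ncard_le_ncard hsub (Finset.finite_toSet _)
      _ ≤ _ := by
        rw [Set.ncard_coe_finset]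
        exact Finset.card_image_le.trans (by simp)
  have htot : S.ncard + Sᶜ.ncard = Fintype.card V := by
    rw [Set.ncard_add_ncard_compl, Nat.card_eq_fintype_card]
  have h5 : S.ncard ≤ 5 * ((w.length - 1) / 3) := by omega
  have hpos : (0:ℚ) < s + 1 := by positivity
  rw [ge_iff_le, div_le_iff₀ hpos] at hG' ⊢
  have hG'' : Sᶜ.ncard ≤ (G.induce Sᶜ).lambdaK 2 * (s + 1) := by exact_mod_cast hG'
  have : Fintype.card V ≤ G.lambdaK 2 * (s + 1) := by
    have h6 : 5 * ((w.length - 1) / 3) ≤ ((w.length - 1) / 3) * (s + 1) := by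
      rw [mul_comm]; exact Nat.mul_le_mul_left _ (by omega)
    have h7 := Nat.mul_le_mul_right (s + 1) hmain
    rw [add_mul] at h7
    omega
  exact_mod_cast this
end

section
/- Let G be a finite simple graph, let T be a path-thread of G with distinct end-vertices x and y, let T' = T − {x,y}, and suppose v(T') = 3k + 2 for some integer k ≥ 1. Let G' be the graph obtained from G − V(T') by adding one new vertex z together with the two new edges xz and yz. If λ(G') ≥ v(G')/4, then λ(G) ≥ v(G)/4. -/
def IsP3 {V : Type*} (G : SimpleGraph V) (s : Set V) : Prop :=
  ∃ a b c : V, G.Adj a b ∧ G.Adj b c ∧ a ≠ c ∧ s = {a, b, c}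

lemma isP3_of_path {V : Type*} {G : SimpleGraph V} (H : G.Subgraph) (h : H.IsKEdgePath 2) :
    IsP3 G H.verts := by
  obtain ⟨u, v, w, hp, hl, rfl⟩ := h
  cases w with
  | nil => simp at hl
  | cons h1 w =>
    cases w with
    | nil => simp at hl
    | cons h2 w =>
      cases w with
      | nil =>
        rename_i b
        refine ⟨u, b, v, h1, h2, ?_, ?_⟩
        · rintro rfl
          simp at hp
        · ext t
          simp
          tauto
      | cons h3 w => simp at hl

lemma path_of_isP3 {V : Type*} {G : SimpleGraph V} (s : Set V) (h : IsP3 G s) :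
    ∃ H : G.Subgraph, H.IsKEdgePath 2 ∧ H.verts = s := by
  obtain ⟨a, b, c, h1, h2, h3, rfl⟩ := h
  refine ⟨_, ⟨a, c, SimpleGraph.Walk.cons h1 (SimpleGraph.Walk.cons h2 SimpleGraph.Walk.nil),
    ?_, rfl, rfl⟩, ?_⟩
  · simp [SimpleGraph.Walk.cons_isPath_iff, h1.ne, h2.ne, h3]
  · ext t
    simp
    tauto

lemma lam_bdd {V : Type*} [Finite V] (G : SimpleGraph V) :
    BddAbove {n | ∃ P : Finset G.Subgraph,
    (∀ H ∈ P, H.IsKEdgePath 2) ∧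
    (P : Set G.Subgraph).Pairwise (fun H H' => Disjoint H.verts H'.verts) ∧
    P.card = n} := by
  classical
  have := Fintype.ofFinite G.Subgraph
  refine ⟨Fintype.card G.Subgraph, ?_⟩
  rintro n ⟨P, -, -, rfl⟩
  exact Finset.card_le_univ P

lemma le_lam {V : Type*} [Finite V] (G : SimpleGraph V) {ι : Type*} [Fintype ι]
    (f : ι → Set V) (hf : ∀ i, IsP3 G (f i)) (hd : ∀ i j, i ≠ j → Disjoint (f i) (f j)) :
    Fintype.card ι ≤ G.lambdaK 2 := by
  classical
  choose H hH hv using fun i => path_of_isP3 (f i) (hf i)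
  have inj : Function.Injective H := by
    intro i j hij
    by_contra hne
    have h := hd i j hne
    rw [← hv i, ← hv j, hij, hv j] at h
    obtain ⟨a, b, c, -, -, -, e⟩ := hf j
    rw [e, disjoint_self] at h
    exact (Set.insert_nonempty _ _).ne_empty h
  refine le_csSup (lam_bdd G) ⟨Finset.univ.image H, ?_, ?_, ?_⟩
  · intro K hK
    obtain ⟨i, -, rfl⟩ := Finset.mem_image.1 hK
    exact hH i
  · intro K hK L hL hne
    obtain ⟨i, -, rfl⟩ := Finset.mem_image.1 (Finset.mem_coe.1 hK)
    obtain ⟨j, -, rfl⟩ := Finset.mem_image.1 (Finset.mem_coe.1 hL)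
    simp only [hv]
    exact hd i j (fun e => hne (by rw [e]))
  · rw [Finset.card_image_of_injective _ inj, Finset.card_univ]

lemma lam_spec {V : Type*} [Finite V] (G : SimpleGraph V) :
    ∃ f : Fin (G.lambdaK 2) → Set V, (∀ i, IsP3 G (f i)) ∧
      ∀ i j, i ≠ j → Disjoint (f i) (f j) := by
  obtain ⟨P, h1, h2, h3⟩ := Nat.sSup_mem (s := {n | ∃ P : Finset G.Subgraph,
    (∀ H ∈ P, H.IsKEdgePath 2) ∧
    (P : Set G.Subgraph).Pairwise (fun H H' => Disjoint H.verts H'.verts) ∧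
    P.card = n}) ⟨0, ∅, by simp⟩ (lam_bdd G)
  change P.card = G.lambdaK 2 at h3
  let e := P.equivFinOfCardEq h3
  refine ⟨fun i => (e.symm i).1.verts, fun i => isP3_of_path _ (h1 _ (e.symm i).2), ?_⟩
  intro i j hij
  exact h2 (e.symm i).2 (e.symm j).2 (fun h => hij (e.symm.injective (Subtype.ext h)))

lemma key {V : Type*} [Finite V] (G : SimpleGraph V) (S : Set V) (k : ℕ) (p : ℕ → V)
    (hadj : ∀ j, j < 3 * k + 3 → G.Adj (p j) (p (j + 1)))
    (hinj : ∀ i j, i ≤ 3 * k + 3 → j ≤ 3 * k + 3 → p i = p j → i = j)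
    (hpS : ∀ j, 0 < j → j < 3 * k + 3 → p j ∈ S)
    {n : ℕ} (g B : Fin n → Set V) (hg : ∀ i, IsP3 G (g i)) (A : Set V) (Z : Fin n → Prop)
    (hZ : ∀ i j, i ≠ j → ¬ (Z i ∧ Z j))
    (hB : ∀ i, B i ⊆ Sᶜ) (hBd : ∀ i j, i ≠ j → Disjoint (B i) (B j))
    (hAS : A ⊆ S) (hgB : ∀ i, ∀ v ∈ g i, v ∈ B i ∨ (Z i ∧ v ∈ A))
    (d : ℕ) (hd : d ≤ 2) (hA : ∀ j, d < j → j ≤ d + 3 * k → p j ∉ A) :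
    n + k ≤ G.lambdaK 2 := by
  have := le_lam G (ι := Fin n ⊕ Fin k)
    (Sum.elim g (fun j => {p (d + 3 * j + 1), p (d + 3 * j + 2), p (d + 3 * j + 3)})) ?_ ?_
  · simpa using this
  · rintro (i | j)
    · exact hg i
    · have := j.2
      refine ⟨_, _, _, hadj _ (by omega), hadj _ (by omega), ?_, rfl⟩
      intro h
      have := hinj _ _ (by omega) (by omega) h
      omega
  · have mixed : ∀ (i : Fin n) (j : Fin k), Disjoint (g i)
        ({p (d + 3 * j + 1), p (d + 3 * j + 2), p (d + 3 * j + 3)} : Set V) := by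
      intro i j
      have hj := j.2
      rw [Set.disjoint_left]
      intro v hv hv'
      have : ∃ t, d < t ∧ t ≤ d + 3 * k ∧ v = p t := by
        rcases hv' with h | h | h
        · exact ⟨_, by omega, by omega, h⟩
        · exact ⟨_, by omega, by omega, h⟩
        · exact ⟨_, by omega, by omega, h⟩
      obtain ⟨t, t1, t2, rfl⟩ := this
      rcases hgB i _ hv with h | ⟨-, h⟩
      · exact hB i h (hpS t (by omega) (by omega))
      · exact hA t t1 t2 h
    rintro (i | i) (j | j) hij
    · have hij' : i ≠ j := fun h => hij (by rw [h])
      simp only [Sum.elim_inl]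
      rw [Set.disjoint_left]
      intro v hv hv'
      rcases hgB i v hv with h | ⟨h, h'⟩ <;> rcases hgB j v hv' with h2 | ⟨h2, h2'⟩
      · exact Set.disjoint_left.1 (hBd i j hij') h h2
      · exact hB i h (hAS h2')
      · exact hB j h2 (hAS h')
      · exact hZ i j hij' ⟨h, h2⟩
    · exact mixed i j
    · exact (mixed j i).symm
    · have hij' : (i : ℕ) ≠ j := fun h => hij (by rw [Fin.ext h])
      have hi := i.2
      have hj := j.2
      simp only [Sum.elim_inr]
      rw [Set.disjoint_left]
      intro v hv hv'
      simp only [Set.mem_insert_iff, Set.mem_singleton_iff] at hv hv'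
      rcases hv with h | h | h <;> rcases hv' with h2 | h2 | h2 <;>
      · have := hinj _ _ (by omega) (by omega) (h.symm.trans h2)
        omega

lemma comb {V : Type*} [Finite V] (G : SimpleGraph V) (S : Set V) (k : ℕ) (hk : 1 ≤ k) (p : ℕ → V)
    (hadj : ∀ j, j < 3 * k + 3 → G.Adj (p j) (p (j + 1)))
    (hinj : ∀ i j, i ≤ 3 * k + 3 → j ≤ 3 * k + 3 → p i = p j → i = j)
    (hpS : ∀ j, 0 < j → j < 3 * k + 3 → p j ∈ S)
    (G' : SimpleGraph (Option ↥Sᶜ))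
    (hss : ∀ a b : ↥Sᶜ, G'.Adj (some a) (some b) → G.Adj a b)
    (hns : ∀ b : ↥Sᶜ, G'.Adj none (some b) → (b : V) = p 0 ∨ (b : V) = p (3 * k + 3)) :
    G'.lambdaK 2 + k ≤ G.lambdaK 2 := by
  classical
  obtain ⟨f, hf, hfd⟩ := lam_spec G'
  set B : Fin (G'.lambdaK 2) → Set V := fun i => {v | ∃ h : v ∈ Sᶜ, some ⟨v, h⟩ ∈ f i} with hBdef
  have hB : ∀ i, B i ⊆ Sᶜ := fun i v hv => hv.1
  have hBd : ∀ i j, i ≠ j → Disjoint (B i) (B j) := by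
    intro i j hij
    rw [Set.disjoint_left]
    rintro v ⟨h, h1⟩ ⟨_, h2⟩
    exact Set.disjoint_left.1 (hfd i j hij) h1 h2
  have hZ : ∀ i j, i ≠ j → ¬ (none ∈ f i ∧ none ∈ f j) := fun i j hij h =>
    Set.disjoint_left.1 (hfd i j hij) h.1 h.2
  have hbase : ∀ i, none ∉ f i → IsP3 G (B i) := by
    intro i hi
    obtain ⟨a, b, c, h1, h2, h3, e⟩ := hf i
    rw [e] at hi
    simp only [Set.mem_insert_iff, Set.mem_singleton_iff, not_or] at hi
    obtain ⟨a, rfl⟩ := Option.ne_none_iff_exists'.1 (Ne.symm hi.1)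
    obtain ⟨b, rfl⟩ := Option.ne_none_iff_exists'.1 (Ne.symm hi.2.1)
    obtain ⟨c, rfl⟩ := Option.ne_none_iff_exists'.1 (Ne.symm hi.2.2)
    refine ⟨a, b, c, hss _ _ h1, hss _ _ h2, fun h => h3 (by rw [Subtype.ext h]), ?_⟩
    ext v
    simp only [hBdef, e, Set.mem_ofPred_eq, Set.mem_insert_iff, Set.mem_singleton_iff,
      Option.some.injEq]
    constructor
    · rintro ⟨h, h | h | h⟩ <;> simp [← h]
    · rintro (rfl | rfl | rfl)
      · exact ⟨a.2, by simp⟩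
      · exact ⟨b.2, by simp⟩
      · exact ⟨c.2, by simp⟩
  by_cases hall : ∀ i, none ∉ f i
  · exact key G S k p hadj hinj hpS B B (fun i => hbase i (hall i)) ∅ (fun _ => False)
      (by simp) hB hBd (by simp) (fun i v hv => Or.inl hv) 0 (by omega) (by simp)
  push Not at hall
  obtain ⟨i0, hi0⟩ := hall
  have fin : ∀ (A s : Set V) (d : ℕ), IsP3 G s → A ⊆ S → (∀ v ∈ s, v ∈ B i0 ∨ v ∈ A) → d ≤ 2 →
      (∀ j, d < j → j ≤ d + 3 * k → p j ∉ A) → G'.lambdaK 2 + k ≤ G.lambdaK 2 := by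
    intro A s d hs hAS hsB hd hA
    refine key G S k p hadj hinj hpS (fun i => if i = i0 then s else B i) B ?_ A
      (fun i => none ∈ f i) hZ hB hBd hAS ?_ d hd hA
    · intro i
      by_cases h : i = i0
      · simpa [h] using hs
      · simp only [h, if_false]
        exact hbase i (fun h' => hZ i i0 h ⟨h', hi0⟩)
    · intro i v hv
      by_cases h : i = i0
      · subst h
        simp only [if_true] at hv
        rcases hsB v hv with h | h
        · exact Or.inl h
        · exact Or.inr ⟨hi0, h⟩
      · simp only [h, if_false] at hv
        exact Or.inl hv
  have pc : ∀ i, 0 < i → i < 3 * k + 3 → ∀ b : ↥Sᶜ, (b : V) ≠ p i := by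
    intro i h1 h2 b hb
    exact b.2 (hb ▸ hpS i h1 h2)
  -- end case: z - b - a
  have endcase : ∀ b a : ↥Sᶜ, G'.Adj none (some b) → G'.Adj (some b) (some a) →
      some b ∈ f i0 → some a ∈ f i0 → G'.lambdaK 2 + k ≤ G.lambdaK 2 := by
    intro b a h1 h2 hb ha
    rcases hns b h1 with h | h
    · refine fin {p 1} {p 1, (b : V), (a : V)} 1 ⟨_, _, _, ?_, hss _ _ h2, ?_, rfl⟩ ?_ ?_
        (by omega) ?_
      · rw [h]
        exact (hadj 0 (by omega)).symm
      · exact (pc 1 (by omega) (by omega) a).symm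
      · simpa using hpS 1 (by omega) (by omega)
      · rintro v (rfl | rfl | rfl)
        · right; rfl
        · left; exact ⟨b.2, hb⟩
        · left; exact ⟨a.2, ha⟩
      · intro j h1 h2 h3
        have := hinj _ _ (by omega) (by omega) (Set.mem_singleton_iff.1 h3)
        omega
    · refine fin {p (3 * k + 2)} {p (3 * k + 2), (b : V), (a : V)} 0
        ⟨_, _, _, ?_, hss _ _ h2, ?_, rfl⟩ ?_ ?_ (by omega) ?_
      · rw [h]
        exact hadj (3 * k + 2) (by omega)
      · exact (pc (3 * k + 2) (by omega) (by omega) a).symm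
      · simpa using hpS (3 * k + 2) (by omega) (by omega)
      · rintro v (rfl | rfl | rfl)
        · right; rfl
        · left; exact ⟨b.2, hb⟩
        · left; exact ⟨a.2, ha⟩
      · intro j h1 h2 h3
        have := hinj _ _ (by omega) (by omega) (Set.mem_singleton_iff.1 h3)
        omega
  have midcase : ∀ b : ↥Sᶜ, (b : V) = p 0 → some b ∈ f i0 →
      G'.lambdaK 2 + k ≤ G.lambdaK 2 := by
    intro b h hb
    refine fin {p 1, p 2} {(b : V), p 1, p 2} 2 ⟨_, _, _, ?_, hadj 1 (by omega), ?_, rfl⟩ ?_ ?_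
        (by omega) ?_
    · rw [h]
      exact hadj 0 (by omega)
    · exact pc 2 (by omega) (by omega) b
    · rintro v (rfl | rfl)
      · exact hpS 1 (by omega) (by omega)
      · exact hpS 2 (by omega) (by omega)
    · rintro v (rfl | h)
      · left; exact ⟨b.2, hb⟩
      · right; exact h
    · rintro j h1 h2 (h3 | h3)
      · have := hinj _ _ (by omega) (by omega) h3
        omega
      · have := hinj _ _ (by omega) (by omega) (Set.mem_singleton_iff.1 h3)
        omega
  obtain ⟨a, b, c, h1, h2, h3, e⟩ := hf i0
  have ma : a ∈ f i0 := by rw [e]; simp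
  have mb : b ∈ f i0 := by rw [e]; simp
  have mc : c ∈ f i0 := by rw [e]; simp
  rw [e] at hi0
  rcases hi0 with h | h | h
  · subst h
    obtain ⟨b, rfl⟩ := Option.ne_none_iff_exists'.1 h1.ne.symm
    obtain ⟨c, rfl⟩ := Option.ne_none_iff_exists'.1 h3.symm
    exact endcase b c h1 h2 mb mc
  · subst h
    obtain ⟨a, rfl⟩ := Option.ne_none_iff_exists'.1 h1.ne
    obtain ⟨c, rfl⟩ := Option.ne_none_iff_exists'.1 h2.ne.symm
    rcases hns a h1.symm with h | h
    · exact midcase a h ma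
    rcases hns c h2 with h' | h'
    · exact midcase c h' mc
    exact absurd (by rw [Subtype.ext (h.trans h'.symm)]) h3
  · rw [Set.mem_singleton_iff] at h
    subst h
    obtain ⟨b, rfl⟩ := Option.ne_none_iff_exists'.1 h2.ne
    obtain ⟨a, rfl⟩ := Option.ne_none_iff_exists'.1 h3
    exact endcase b a h2.symm h1.symm mb ma

/-- Let `G` be a finite simple graph, `T` a path-thread of `G` with distinct
end-vertices `x` and `y`, `T' = T − {x,y}`, and suppose `v(T') = 3k + 2` for some
`k ≥ 1`.  Let `G'` be obtained from `G − V(T')` by adding a new vertex `z`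
(modelled by `none : Option ↥Sᶜ`) together with the two new edges `xz` and `yz`.
If `λ(G') ≥ v(G')/4`, then `λ(G) ≥ v(G)/4`. -/
theorem stmt_9 {V : Type} [Fintype V]
    (G : SimpleGraph V) {x y : V} (w : G.Walk x y)
    (hw : G.IsPathThread w) (hxy : x ≠ y)
    (S : Set V) (hS : S = {v : V | v ∈ w.support ∧ v ≠ x ∧ v ≠ y})
    (k : ℕ) (hk : 1 ≤ k) (hcard : S.ncard = 3 * k + 2)
    (G' : SimpleGraph (Option ↥Sᶜ))
    (hG'def : G' = SimpleGraph.fromRel (fun a b =>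
      (∃ a' b' : ↥Sᶜ, a = some a' ∧ b = some b' ∧ G.Adj a' b') ∨
      (a = none ∧ ∃ b' : ↥Sᶜ, b = some b' ∧ ((b' : V) = x ∨ (b' : V) = y))))
    (hG' : (G'.lambdaK 2 : ℚ) ≥ ((Sᶜ.ncard : ℚ) + 1) / 4) :
    (G.lambdaK 2 : ℚ) ≥ (Fintype.card V : ℚ) / 4 := by
  classical
  have hp := hw.1
  have hinj : ∀ i j, i ≤ w.length → j ≤ w.length → w.getVert i = w.getVert j → i = j :=
    fun i j hi hj h => hp.getVert_injOn hi hj h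
  have hmem : ∀ v, v ∈ S ↔ ∃ j, 0 < j ∧ j < w.length ∧ w.getVert j = v := by
    intro v
    rw [hS, Set.mem_ofPred_eq, SimpleGraph.Walk.mem_support_iff_exists_getVert]
    constructor
    · rintro ⟨⟨j, rfl, hj⟩, h1, h2⟩
      refine ⟨j, Nat.pos_of_ne_zero ?_, lt_of_le_of_ne hj ?_, rfl⟩
      · rintro rfl
        simp at h1
      · rintro rfl
        simp at h2
    · rintro ⟨j, h1, h2, rfl⟩
      refine ⟨⟨j, rfl, h2.le⟩, ?_, ?_⟩
      · intro h
        have := hinj j 0 h2.le (by omega) (by simpa using h)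
        omega
      · intro h
        have := hinj j w.length h2.le le_rfl (by simpa using h)
        omega
  have hSi : S = w.getVert '' ((Finset.Ioo 0 w.length : Finset ℕ) : Set ℕ) := by
    ext v
    rw [hmem]
    simp [and_assoc]
  have hlen : w.length = 3 * k + 3 := by
    have h := hcard
    rw [hSi, Set.InjOn.ncard_image, Set.ncard_coe_finset, Nat.card_Ioo] at h
    · omega
    · intro i hi j hj h
      simp at hi hj
      exact hinj i j hi.2.le hj.2.le h
  have main := comb G S k hk w.getVert (fun j hj => w.adj_getVert_succ (by omega))
    (fun i j hi hj => hinj i j (by omega) (by omega))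
    (fun j h1 h2 => (hmem _).2 ⟨j, h1, by omega, rfl⟩) G'
    (by
      intro a b h
      rw [hG'def, SimpleGraph.fromRel_adj] at h
      rcases h.2 with (⟨a', b', ha, hb, h⟩ | ⟨h, -⟩) | (⟨a', b', ha, hb, h⟩ | ⟨h, -⟩)
      · cases ha; cases hb; exact h
      · cases h
      · cases ha; cases hb; exact h.symm
      · cases h)
    (by
      intro b h
      rw [← hlen]
      simp only [SimpleGraph.Walk.getVert_zero, SimpleGraph.Walk.getVert_length]
      rw [hG'def, SimpleGraph.fromRel_adj] at h
      rcases h.2 with (⟨a', b', ha, hb, h⟩ | ⟨-, b', hb, h⟩) | (⟨a', b', ha, hb, h⟩ | ⟨h, -⟩)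
      · cases ha
      · cases hb; exact h
      · cases hb
      · cases h)
  have hc : S.ncard + Sᶜ.ncard = Fintype.card V := by
    rw [Set.ncard_add_ncard_compl, Nat.card_eq_fintype_card]
  rw [← hc, hcard]
  have m : ((G'.lambdaK 2 : ℚ) + k ≤ G.lambdaK 2) := by exact_mod_cast main
  have k1 : (1 : ℚ) ≤ k := by exact_mod_cast hk
  push_cast
  linarith
end
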